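/- arXiv:2512.04633 — 2 statements merged into one kernel-verified Lean document; each statement's English description precedes it below -/
import Mathlib

section
/- Let K ⊆ ℝ² be a convex body, C ⊆ ℝ² a 0-symmetric convex body, and suppose K is pseudo-complete with respect to C. Then D(K,C)/w(K,C) ≤ (φ+1)/2, where φ = (1+√5)/2. -/
open scoped Pointwise RealInnerProductSpace
open Set

noncomputable section

abbrev E2 := EuclideanSpace ℝ (Fin 2)

/-- A convex body: compact convex set with nonempty interior. -/
def IsConvexBody (K : Set E2) : Prop :=
  Convex ℝ K ∧ IsCompact K ∧ (interior K).Nonempty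

/-- circumradius `R(K,C)` -/
def circum (K C : Set E2) : ℝ :=
  sInf {ρ : ℝ | 0 < ρ ∧ ∃ t : E2, K ⊆ ρ • C + {t}}

/-- inradius `r(K,C)` -/
def inrad (K C : Set E2) : ℝ :=
  sSup {ρ : ℝ | 0 < ρ ∧ ∃ t : E2, ρ • C + {t} ⊆ K}

/-- width `w(K,C)` -/
def widthB (K C : Set E2) : ℝ := 2 * inrad (K - K) (C - C)

/-- diameter `D(K,C)` -/
def diamB (K C : Set E2) : ℝ := 2 * circum (K - K) (C - C)

/-- Minkowski asymmetry `s(K)` -/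
def minkAsym (K : Set E2) : ℝ :=
  sInf {ρ : ℝ | 0 < ρ ∧ ∃ c : E2, K - {c} ⊆ ρ • ({c} - K)}

/-- `K` is Minkowski centered -/
def MinkCentered (K : Set E2) : Prop := K ⊆ minkAsym K • (-K)

/-- `τ(K)`: smallest `ρ > 0` with `K ∩ (-K) ⊆ ρ • ((K-K)/2)` -/
def tauB (K : Set E2) : ℝ :=
  sInf {ρ : ℝ | 0 < ρ ∧ K ∩ (-K) ⊆ ρ • ((2:ℝ)⁻¹ • (K - K))}

/-- golden ratio -/
def phiR : ℝ := (1 + Real.sqrt 5) / 2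

def cExpr2 (s : ℝ) : ℝ :=
  (s^2+1)^2 / ((s^2-1) * (s^2+2*s-1+2*Real.sqrt (s*(s^2-1))))

def cExpr3 (s : ℝ) : ℝ := 2*(s^2-2*s-1) / ((s-3)*(s+1))

/-- `ŝ`: the unique `s ∈ (φ,2)` where the two expressions agree. -/
def sHat : ℝ := sInf {s : ℝ | phiR < s ∧ s < 2 ∧ cExpr2 s = cExpr3 s}

def cFun (s : ℝ) : ℝ :=
  if s ≤ phiR then 1 else if s ≤ sHat then cExpr2 s else cExpr3 s

/-- polar body -/
def polarBody (K : Set E2) : Set E2 := {y | ∀ x ∈ K, (inner ℝ x y : ℝ) ≤ 1}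

/-- `γ(K)` -/
def gammaB (K : Set E2) : ℝ :=
  sInf {ρ : ℝ | 0 < ρ ∧
    polarBody ((2:ℝ)⁻¹ • (polarBody K - polarBody K)) ⊆ ρ • convexHull ℝ (K ∪ -K)}

/-- positive hull of two points -/
def posHull2 (a b : E2) : Set E2 := {x | ∃ α β : ℝ, 0 ≤ α ∧ 0 ≤ β ∧ x = α • a + β • b}

/-- asymmetry point of `K`: a point of `bd(K) ∩ bd(−(1/s(K))·K)` -/
def IsAsymPoint (K : Set E2) (p : E2) : Prop :=
  p ∈ frontier K ∧ p ∈ frontier ((-(minkAsym K)⁻¹) • K)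

/-- a well-spread triple of asymmetry points -/
def WellSpread (K : Set E2) (p1 p2 p3 : E2) : Prop :=
  IsAsymPoint K p1 ∧ IsAsymPoint K p2 ∧ IsAsymPoint K p3 ∧
  ∃ a1 a2 a3 : E2, a1 ≠ 0 ∧ a2 ≠ 0 ∧ a3 ≠ 0 ∧
    (∀ x ∈ K, (inner ℝ a1 x : ℝ) ≤ inner ℝ a1 p1) ∧
    (∀ x ∈ K, (inner ℝ a2 x : ℝ) ≤ inner ℝ a2 p2) ∧
    (∀ x ∈ K, (inner ℝ a3 x : ℝ) ≤ inner ℝ a3 p3) ∧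
    (0:E2) ∈ interior (convexHull ℝ {p1, p2, p3}) ∧
    (0:E2) ∈ convexHull ℝ {a1, a2, a3}

/-- two points of `bd(K) ∩ bd(-K)` are consecutive -/
def Consecutive (K : Set E2) (z1 z2 : E2) : Prop :=
  ¬ ∃ z, z ∈ frontier K ∩ frontier (-K) ∧ z ∈ interior (posHull2 z1 z2)

/-- point of the plane from coordinates -/
def pt (x y : ℝ) : E2 := (WithLp.equiv 2 (Fin 2 → ℝ)).symm ![x, y]

/-- the golden house -/
def goldenHouse : Set E2 :=
  convexHull ℝ {pt 1 0, pt (-1) 0, pt 1 (-1), pt (-1) (-1), pt 0 phiR}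

/-! Write `r`, `R`, `D`, `w` for the inradius, circumradius, diameter and width. At a circumcenter
`z`, normals `a i` in the polar of `C` at touching points `p i` of `K` balance to `0`. Since
`r + R = D`, the body `K` also satisfies `-r ≤ ⟪a i, y - z⟫`, and this forces the incenter to be `z`
as soon as the `a i` span the plane.

If `R ≤ φ r`, then `w ≥ 2 r ≥ 2 D / φ²`. Otherwise the balance takes three normals, and every
direction is of the form `β • a j - α • a i` with `α, β ≥ 0`. Weighing the slacks
`⟪a k, y - z⟫ + r`, whose weighted sum is always `r`, gives
`⟪a j - a i, p j - p i⟫ ≥ 4 (R² - r²) / R`. Hence in every direction either the segment from `p i`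
to `p j` or a segment from one of these points to a point of the inball is long enough for `K - K`
to contain `(2 D / φ²) • C`. -/

section Golden

lemma add_div_goldenRatio_sq_le {r R : ℝ} (hr : 0 < r) (h : Real.goldenRatio * r ≤ R) :
    (r + R) / Real.goldenRatio ^ 2 ≤ (R ^ 2 - r ^ 2) / R := by
  have hR : 0 < R := (mul_pos Real.goldenRatio_pos hr).trans_le h
  have hφ := Real.goldenRatio_sq
  rw [div_le_div_iff₀ (by positivity) hR]
  have key : R ≤ (R - r) * Real.goldenRatio ^ 2 := by
    nlinarith [mul_le_mul_of_nonneg_left h Real.goldenRatio_pos.le]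
  calc (r + R) * R ≤ (r + R) * ((R - r) * Real.goldenRatio ^ 2) := by gcongr
    _ = (R ^ 2 - r ^ 2) * Real.goldenRatio ^ 2 := by ring

lemma two_mul_add_div_goldenRatio_sq_le {r R : ℝ} (hr : 0 < r) (h : Real.goldenRatio * r ≤ R) :
    2 * ((r + R) / Real.goldenRatio ^ 2) ≤ r + (R ^ 2 - r ^ 2) / R := by
  have hφ := Real.goldenRatio_sq
  have hφ_pos := Real.goldenRatio_pos
  have hφ_one := Real.one_lt_goldenRatio
  have hR : 0 < R := (mul_pos hφ_pos hr).trans_le h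
  have key : Real.goldenRatio * (Real.goldenRatio + 1) * r ^ 2 ≤ R * (R + r) :=
    calc Real.goldenRatio * (Real.goldenRatio + 1) * r ^ 2
        = (Real.goldenRatio * r) * (Real.goldenRatio * r + r) := by ring
      _ ≤ R * (R + r) := by gcongr
  have hr_le : (Real.goldenRatio + 1) * r ^ 2 ≤ (Real.goldenRatio - 1) * (R * (R + r)) :=
    calc (Real.goldenRatio + 1) * r ^ 2
        = (Real.goldenRatio - 1) * (Real.goldenRatio * (Real.goldenRatio + 1) * r ^ 2) := by
          linear_combination (-(Real.goldenRatio + 1) * r ^ 2) * hφ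
      _ ≤ (Real.goldenRatio - 1) * (R * (R + r)) :=
          mul_le_mul_of_nonneg_left key (sub_nonneg.2 hφ_one.le)
  rw [mul_div_assoc', add_div' _ _ _ hR.ne', div_le_div_iff₀ (by positivity) hR, hφ]
  linarith

end Golden

lemma four_mul_le_add_mul_add {x y A B q : ℝ} (hx : 0 < x) (hy : 0 < y) (hq : 0 ≤ q)
    (hA : q ≤ y * A) (hB : q ≤ x * B) : 4 * q ≤ (x + y) * (A + B) := by
  have hA' : q / y ≤ A := (div_le_iff₀' hy).2 hA
  have hB' : q / x ≤ B := (div_le_iff₀' hx).2 hB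
  calc 4 * q ≤ q * ((x + y) ^ 2 / (x * y)) := by
        rw [mul_comm]
        gcongr
        rw [le_div_iff₀ (by positivity)]
        linarith [sq_nonneg (x - y)]
    _ = (x + y) * (q / y + q / x) := by field_simp
    _ ≤ (x + y) * (A + B) := by gcongr

lemma exists_equiv_fin_monotone_comp {ι α : Type*} [Fintype ι] [LinearOrder α] {n : ℕ}
    (hn : Fintype.card ι = n) (g : ι → α) : ∃ e : Fin n ≃ ι, Monotone (g ∘ e) :=
  let e := (Fintype.equivFinOfCardEq hn).symm
  ⟨(Tuple.sort (g ∘ e)).trans e, Tuple.monotone_sort (g ∘ e)⟩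

section Pointwise

lemma neg_mem_of_eq_neg {G : Type*} [InvolutiveNeg G] {s : Set G} {x : G} (hsymm : s = -s)
    (hx : x ∈ s) : -x ∈ s := by
  rwa [hsymm, neg_mem_neg]

lemma mem_add_singleton_iff {G : Type*} [AddGroup G] {s : Set G} {x t : G} :
    x ∈ s + {t} ↔ x - t ∈ s := by
  simp only [add_singleton, image_add_right, mem_preimage, sub_eq_add_neg]

variable {E : Type*} [AddCommGroup E] [Module ℝ E]

lemma sub_self_eq_two_smul {s : Set E} (hs : Convex ℝ s) (hsymm : s = -s) :
    s - s = (2 : ℝ) • s := by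
  rw [sub_eq_add_neg, ← hsymm, ← one_add_one_eq_two, hs.add_smul zero_le_one zero_le_one, one_smul]

lemma smul_add_singleton_subset_iff {s u : Set E} {ρ : ℝ} {t : E} :
    ρ • s + {t} ⊆ u ↔ ∀ x ∈ s, ρ • x + t ∈ u := by
  simp only [add_singleton, ← image_smul, image_image, image_subset_iff]
  rfl

end Pointwise

section Topology

open Topology

lemma exists_pos_subset_smul {E : Type*} [NormedAddCommGroup E] [NormedSpace ℝ E] {s t : Set E}
    (hs : Bornology.IsBounded s) (ht : t ∈ 𝓝 0) : ∃ ρ : ℝ, 0 < ρ ∧ s ⊆ ρ • t := by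
  obtain ⟨ρ, hρ, hsub⟩ := ((NormedSpace.isVonNBounded_iff ℝ).2 hs ht).exists_pos
  exact ⟨ρ, hρ, hsub ρ (le_abs_self ρ)⟩

lemma zero_mem_interior_of_eq_neg {E : Type*} [AddCommGroup E] [Module ℝ E] [TopologicalSpace E]
    [IsTopologicalAddGroup E] [ContinuousSMul ℝ E] {s : Set E} (hs : Convex ℝ s) (hsymm : s = -s)
    (hne : (interior s).Nonempty) : (0 : E) ∈ interior s := by
  obtain ⟨x, hx⟩ := hne
  have hx' : -x ∈ interior s := by
    rw [hsymm] at hx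
    exact ((Homeomorph.neg E).preimage_interior s).symm.subset hx
  simpa using hs.interior.midpoint_mem hx hx'

lemma isCompact_sub {G : Type*} [TopologicalSpace G] [AddGroup G] [IsTopologicalAddGroup G]
    {s t : Set G} (hs : IsCompact s) (ht : IsCompact t) : IsCompact (s - t) := by
  simpa only [sub_eq_add_neg] using hs.add ht.neg

lemma isCompact_convexHull_of_isCompact {E : Type*} [AddCommGroup E] [Module ℝ E]
    [TopologicalSpace E] [IsTopologicalAddGroup E] [ContinuousSMul ℝ E] [FiniteDimensional ℝ E]
    {s : Set E} (hs : IsCompact s) : IsCompact (convexHull ℝ s) := by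
  let combinations (m : ℕ) : Set E := (fun q : (Fin m → ℝ) × (Fin m → E) => ∑ i, q.1 i • q.2 i) ''
    (stdSimplex ℝ (Fin m) ×ˢ univ.pi fun _ => s)
  have hcompact (m : ℕ) : IsCompact (combinations m) :=
    ((isCompact_stdSimplex ℝ (Fin m)).prod (isCompact_univ_pi fun _ => hs)).image (by fun_prop)
  suffices convexHull ℝ s = ⋃ m ∈ Finset.range (Module.finrank ℝ E + 2), combinations m by
    rw [this]
    exact Finset.isCompact_biUnion _ fun m _ => hcompact m
  refine Subset.antisymm (fun x hx => ?_) (iUnion₂_subset fun m _ => ?_)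
  · obtain ⟨ι, _, a, w, ha, hind, hw, hw_sum, rfl⟩ := eq_pos_convex_span_of_mem_convexHull hx
    have hcard : Fintype.card ι < Module.finrank ℝ E + 2 :=
      Nat.lt_succ_of_le (hind.card_le_finrank_succ.trans (by gcongr; exact Submodule.finrank_le _))
    let e := (Fintype.equivFin ι).symm
    refine mem_biUnion (Finset.mem_range.2 hcard)
      ⟨(w ∘ e, a ∘ e), ⟨⟨fun i => (hw _).le, ?_⟩, ?_⟩, ?_⟩
    · exact (e.sum_comp w).trans hw_sum
    · exact fun i _ => ha (mem_range_self _)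
    · exact e.sum_comp fun i => w i • a i
  · rintro _ ⟨⟨w, a⟩, ⟨hw, ha⟩, rfl⟩
    exact (convex_convexHull ℝ s).sum_mem (fun i _ => hw.1 i) hw.2
      fun i _ => subset_convexHull ℝ s (ha i trivial)

lemma exists_lt_forall_le_of_isCompact {X α : Type*} [TopologicalSpace X] [LinearOrder α]
    [TopologicalSpace α] [ClosedIciTopology α] [NoMinOrder α] {s : Set X} {g : X → α} {R : α}
    (hs : IsCompact s) (hg : ContinuousOn g s) (hlt : ∀ x ∈ s, g x < R) :
    ∃ m < R, ∀ x ∈ s, g x ≤ m :=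
  hs.exists_forall_le' (α := αᵒᵈ) hg hlt

lemma exists_forall_sub_mul_le_of_isCompact {X : Type*} [TopologicalSpace X] {s : Set X}
    {g h : X → ℝ} {R : ℝ} (hs : IsCompact s) (hg : Continuous g) (hh : Continuous h)
    (hle : ∀ x ∈ s, g x ≤ R) (hpos : ∀ x ∈ s, g x = R → 0 < h x) :
    ∃ ε : ℝ, ∃ R' < R, ∀ x ∈ s, g x - ε * h x ≤ R' := by
  obtain ⟨m, hmR, hm⟩ : ∃ m < R, ∀ x ∈ s ∩ {x | h x ≤ 0}, g x ≤ m :=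
    exists_lt_forall_le_of_isCompact (hs.inter_right (isClosed_le hh continuous_const))
      hg.continuousOn fun x hx => (hle x hx.1).lt_of_ne fun hgx => (hpos x hx.1 hgx).not_ge hx.2
  obtain ⟨B, hB⟩ := hs.exists_bound_of_continuousOn hh.continuousOn
  obtain ⟨ε, hε, hεB⟩ : ∃ ε > 0, B * ε < R - m := exists_pos_mul_lt (sub_pos.2 hmR) B
  refine ⟨ε, exists_lt_forall_le_of_isCompact hs (by fun_prop) fun x hx => ?_⟩
  rcases le_or_gt (h x) 0 with hx0 | hx0
  · have hBx : -h x * ε ≤ B * ε :=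
      mul_le_mul_of_nonneg_right ((neg_le_abs _).trans (hB x hx)) hε.le
    linarith [hm x ⟨hx, hx0⟩]
  · linarith [hle x hx, mul_pos hε hx0]

section NormedSpace

variable {E : Type*} [NormedAddCommGroup E] [NormedSpace ℝ E] {K C : Set E} {t x y : E} {ρ : ℝ}

lemma mul_dist_le_diam_of_smul_add_subset (hK : Bornology.IsBounded K) (hx : x ∈ C) (hy : y ∈ C)
    (h : ρ • C + {t} ⊆ K) : ρ * dist x y ≤ Metric.diam K := by
  rw [smul_add_singleton_subset_iff] at h
  calc ρ * dist x y ≤ ‖ρ‖ * dist x y := by gcongr; exact le_abs_self ρ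
    _ = dist (ρ • x + t) (ρ • y + t) := by rw [dist_add_right, dist_smul₀]
    _ ≤ Metric.diam K := Metric.dist_le_diam_of_mem hK (h x hx) (h y hy)

lemma bddAbove_setOf_smul_add_subset (hK : Bornology.IsBounded K) (hC : C.Nontrivial) :
    BddAbove {ρ : ℝ | 0 < ρ ∧ ∃ t : E, ρ • C + {t} ⊆ K} := by
  obtain ⟨x, hx, y, hy, hxy⟩ := hC
  exact ⟨Metric.diam K / dist x y, fun ρ ⟨_, t, ht⟩ =>
    (le_div_iff₀ (dist_pos.2 hxy)).2 (mul_dist_le_diam_of_smul_add_subset hK hx hy ht)⟩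

lemma exists_pos_smul_add_subset (hK : (interior K).Nonempty) (hC : Bornology.IsBounded C) :
    ∃ ρ : ℝ, 0 < ρ ∧ ∃ t : E, ρ • C + {t} ⊆ K := by
  obtain ⟨t, ht⟩ := hK
  have hnhds : (· + t) ⁻¹' K ∈ 𝓝 0 :=
    (continuous_add_const t).continuousAt.preimage_mem_nhds
      (by rw [zero_add]; exact mem_interior_iff_mem_nhds.1 ht)
  obtain ⟨ρ, hρ, hsub⟩ := exists_pos_subset_smul hC hnhds
  refine ⟨ρ⁻¹, inv_pos.2 hρ, t, smul_add_singleton_subset_iff.2 fun c hc => ?_⟩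
  exact (mem_smul_set_iff_inv_smul_mem₀ hρ.ne' _ _).1 (hsub hc)

end NormedSpace

end Topology

section InnerProductSpace

universe u

variable {E : Type u} [NormedAddCommGroup E] [InnerProductSpace ℝ E]

lemma exists_inner_lt_of_notMem [CompleteSpace E] {s : Set E} (hs : Convex ℝ s)
    (hclosed : IsClosed s) {x : E} (hx : x ∉ s) :
    ∃ v : E, ∃ u : ℝ, (∀ y ∈ s, ⟪v, y⟫ < u) ∧ u < ⟪v, x⟫ := by
  obtain ⟨f, u, hf, hu⟩ := geometric_hahn_banach_closed_point hs hclosed hx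
  refine ⟨(InnerProductSpace.toDual ℝ E).symm f, u, ?_⟩
  simpa only [InnerProductSpace.toDual_symm_apply] using And.intro hf hu

lemma mem_of_forall_exists_inner_le [CompleteSpace E] {s : Set E} (hs : Convex ℝ s)
    (hclosed : IsClosed s) {x : E} (h : ∀ v : E, ∃ y ∈ s, ⟪v, x⟫ ≤ ⟪v, y⟫) : x ∈ s := by
  by_contra hx
  obtain ⟨v, u, hlt, hu⟩ := exists_inner_lt_of_notMem hs hclosed hx
  obtain ⟨y, hy, hxy⟩ := h v
  exact (hlt y hy).not_gt (hu.trans_le hxy)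

/-- If `0` were not in the convex hull, moving the center `z` along a separating direction would
decrease the maximum. -/
lemma zero_mem_convexHull_of_forall_le [FiniteDimensional ℝ E] {K P : Set E} {z : E} {R : ℝ}
    (hK : IsCompact K) (hP : IsCompact P) (hle : ∀ p ∈ K, ∀ a ∈ P, ⟪a, p - z⟫ ≤ R)
    (hmin : ∀ t R', (∀ p ∈ K, ∀ a ∈ P, ⟪a, p - t⟫ ≤ R') → R ≤ R') :
    (0 : E) ∈ convexHull ℝ {a | a ∈ P ∧ ∃ p ∈ K, ⟪a, p - z⟫ = R} := by
  have : CompleteSpace E := FiniteDimensional.complete ℝ E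
  have htouch : IsCompact {a | a ∈ P ∧ ∃ p ∈ K, ⟪a, p - z⟫ = R} := by
    have hpairs : IsCompact ((P ×ˢ K) ∩ {q : E × E | ⟪q.1, q.2 - z⟫ = R}) :=
      (hP.prod hK).inter_right (isClosed_eq (by fun_prop) continuous_const)
    convert! hpairs.image continuous_fst using 1
    ext a
    simp [and_assoc]
  by_contra h0
  obtain ⟨v, u, hlt, hu⟩ := exists_inner_lt_of_notMem (convex_convexHull ℝ _)
    (isCompact_convexHull_of_isCompact htouch).isClosed h0
  rw [inner_zero_right] at hu
  obtain ⟨ε, R', hR', hε⟩ := exists_forall_sub_mul_le_of_isCompact (hK.prod hP)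
    (g := fun q => ⟪q.2, q.1 - z⟫) (h := fun q => ⟪-v, q.2⟫) (by fun_prop) (by fun_prop)
    (fun q hq => hle q.1 hq.1 q.2 hq.2) fun q hq hqR => by
      rw [inner_neg_left]
      linarith [hlt q.2 (subset_convexHull ℝ _ ⟨hq.2, q.1, hq.1, hqR⟩)]
  refine hR'.not_ge (hmin (z - ε • v) R' fun p hp a ha => ?_)
  have hpa := hε (p, a) ⟨hp, ha⟩
  simp only [inner_neg_left, real_inner_comm a v] at hpa
  simp only [inner_sub_right, real_inner_smul_right] at hpa ⊢
  linarith

lemma span_range_eq_top_of_affineIndependent [FiniteDimensional ℝ E] {ι : Type*} [Fintype ι]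
    {a : ι → E} (hind : AffineIndependent ℝ a) (hcard : Fintype.card ι = Module.finrank ℝ E + 1) :
    Submodule.span ℝ (range a) = ⊤ := by
  have htop := hind.affineSpan_eq_top_iff_card_eq_finrank_add_one.2 hcard
  refine (Submodule.eq_top_iff').2 fun x => ?_
  exact affineSpan_subset_span (htop ▸ AffineSubspace.mem_top ℝ E x)

/-- Points `p i` of `K` at which `K` touches the half-spaces `{y | ⟪a i, y - z⟫ ≤ R}`, with weights
`l i` balancing the normals `a i`: the optimality certificate for `z` and `R` being the circumcenter
and circumradius. The field `neg_le_inner` records what pseudo-completeness adds, namely that `K`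
reaches at most `r` to the other side of `z` in each direction `a i`. -/
structure IsTouchingSystem {ι : Type*} [Fintype ι] (K : Set E) (z : E) (r R : ℝ) (l : ι → ℝ)
    (a p : ι → E) : Prop where
  weight_pos : ∀ i, 0 < l i
  sum_weight : ∑ i, l i = 1
  sum_weight_smul : ∑ i, l i • a i = 0
  point_mem : ∀ i, p i ∈ K
  inner_point : ∀ i, ⟪a i, p i - z⟫ = R
  neg_le_inner : ∀ i, ∀ y ∈ K, -r ≤ ⟪a i, y - z⟫

lemma exists_isTouchingSystem {K P : Set E} {z : E} {r R : ℝ}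
    (h0 : (0 : E) ∈ convexHull ℝ {a | a ∈ P ∧ ∃ p ∈ K, ⟪a, p - z⟫ = R})
    (hdiam : ∀ a ∈ P, ∀ x ∈ K, ∀ y ∈ K, ⟪a, x - y⟫ ≤ r + R) :
    ∃ (ι : Type u) (_ : Fintype ι) (l : ι → ℝ) (a p : ι → E),
      IsTouchingSystem K z r R l a p ∧ AffineIndependent ℝ a ∧ ∀ i, a i ∈ P := by
  obtain ⟨ι, _, a, l, ha, hind, hl, hl_sum, hl_smul⟩ := eq_pos_convex_span_of_mem_convexHull h0
  have htouch (i : ι) : a i ∈ P ∧ ∃ p ∈ K, ⟪a i, p - z⟫ = R := ha (mem_range_self i)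
  choose haP p hp hpR using htouch
  refine ⟨ι, _, l, a, p, ⟨hl, hl_sum, hl_smul, hp, hpR, fun i y hy => ?_⟩, hind, haP⟩
  have hpy := hdiam (a i) (haP i) (p i) (hp i) y hy
  have hpz := hpR i
  rw [← sub_sub_sub_cancel_right _ _ z, inner_sub_right] at hpy
  linarith

namespace IsTouchingSystem

variable {ι κ : Type*} [Fintype ι] [Fintype κ] {K : Set E} {z : E} {r R : ℝ} {l : ι → ℝ}
  {a p : ι → E}

lemma comp_equiv (h : IsTouchingSystem K z r R l a p) (e : κ ≃ ι) :
    IsTouchingSystem K z r R (l ∘ e) (a ∘ e) (p ∘ e) where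
  weight_pos i := h.weight_pos (e i)
  sum_weight := (e.sum_comp l).trans h.sum_weight
  sum_weight_smul := (e.sum_comp fun i => l i • a i).trans h.sum_weight_smul
  point_mem i := h.point_mem (e i)
  inner_point i := h.inner_point (e i)
  neg_le_inner i := h.neg_le_inner (e i)

lemma sum_weight_mul_inner (h : IsTouchingSystem K z r R l a p) (v : E) :
    ∑ i, l i * ⟪a i, v⟫ = 0 := by
  simpa only [sum_inner, real_inner_smul_left, inner_zero_left] using
    congrArg (⟪·, v⟫) h.sum_weight_smul

lemma eq_zero_of_forall_inner_nonneg (h : IsTouchingSystem K z r R l a p)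
    (hspan : Submodule.span ℝ (range a) = ⊤) {v : E} (hv : ∀ i, 0 ≤ ⟪a i, v⟫) : v = 0 := by
  have hterm := (Finset.sum_eq_zero_iff_of_nonneg fun i _ =>
    mul_nonneg (h.weight_pos i).le (hv i)).1 (h.sum_weight_mul_inner v)
  have horth (i : ι) : ⟪a i, v⟫ = 0 :=
    (mul_eq_zero.1 (hterm i (Finset.mem_univ i))).resolve_left (h.weight_pos i).ne'
  obtain ⟨c, hc⟩ := (Submodule.mem_span_range_iff_exists_fun ℝ).1 (Submodule.eq_top_iff'.1 hspan v)
  rw [← inner_self_eq_zero (𝕜 := ℝ)]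
  nth_rw 1 [← hc]
  simp [sum_inner, real_inner_smul_left, horth]

lemma eq_center_of_forall_smul_add_mem (h : IsTouchingSystem K z r R l a p)
    (hspan : Submodule.span ℝ (range a) = ⊤) (hR : 0 < R) {C : Set E} (hsymm : C = -C)
    (hp : ∀ i, p i - z ∈ R • C) {t : E} (ht : ∀ c ∈ C, r • c + t ∈ K) : t = z := by
  refine sub_eq_zero.1 (h.eq_zero_of_forall_inner_nonneg hspan fun i => ?_)
  obtain ⟨c, hc, hcp⟩ := hp i
  have hac : ⟪a i, c⟫ = 1 := by
    have hRc := h.inner_point i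
    rw [← hcp, real_inner_smul_right] at hRc
    exact mul_left_cancel₀ hR.ne' (hRc.trans (mul_one R).symm)
  have hle := h.neg_le_inner i _ (ht (-c) (neg_mem_of_eq_neg hsymm hc))
  rw [add_sub_assoc, inner_add_right, real_inner_smul_right, inner_neg_right, hac] at hle
  linarith

lemma weight_mul_slack_nonneg (h : IsTouchingSystem K z r R l a p) {y : E} (hy : y ∈ K) (i : ι) :
    0 ≤ l i * (⟪a i, y - z⟫ + r) :=
  mul_nonneg (h.weight_pos i).le (by linarith [h.neg_le_inner i y hy])

lemma sum_weight_mul_slack (h : IsTouchingSystem K z r R l a p) (y : E) :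
    ∑ i, l i * (⟪a i, y - z⟫ + r) = r := by
  simp only [mul_add, Finset.sum_add_distrib, h.sum_weight_mul_inner, ← Finset.sum_mul,
    h.sum_weight, zero_add, one_mul]

lemma weight_mul_le (h : IsTouchingSystem K z r R l a p) (i : ι) : l i * (r + R) ≤ r := by
  have hle := Finset.single_le_sum (fun j _ => h.weight_mul_slack_nonneg (h.point_mem i) j)
    (Finset.mem_univ i)
  rwa [h.sum_weight_mul_slack, h.inner_point, add_comm R] at hle

lemma add_le_card_mul (h : IsTouchingSystem K z r R l a p) : r + R ≤ Fintype.card ι * r :=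
  calc r + R = ∑ i, l i * (r + R) := by rw [← Finset.sum_mul, h.sum_weight, one_mul]
    _ ≤ ∑ _i : ι, r := Finset.sum_le_sum fun i _ => h.weight_mul_le i
    _ = Fintype.card ι * r := by simp

lemma add_weight_mul_sub_le (h : IsTouchingSystem K z r R l a p) {i j : ι} (hij : i ≠ j) :
    (l i + l j) * (r + R) - r ≤ l j * ⟪a j, p j - p i⟫ := by
  classical
  have hpair := Finset.sum_le_sum_of_subset_of_nonneg (Finset.subset_univ {i, j})
    fun k _ _ => h.weight_mul_slack_nonneg (h.point_mem i) k
  rw [Finset.sum_pair hij, h.sum_weight_mul_slack, h.inner_point] at hpair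
  rw [← sub_sub_sub_cancel_right _ _ z, inner_sub_right, h.inner_point]
  linarith

section Triple

variable {l : Fin 3 → ℝ} {a p : Fin 3 → E} {α β : ℝ}

lemma four_mul_le_inner_add_inner (h : IsTouchingSystem K z r R l a p) (hr : 0 < r) (hrR : r ≤ R) :
    4 * ((R ^ 2 - r ^ 2) / R) ≤ ⟪a 2, p 2 - p 0⟫ + ⟪a 0, p 0 - p 2⟫ := by
  have hR : 0 < R := hr.trans_le hrR
  have hS : 0 < l 0 + l 2 := add_pos (h.weight_pos 0) (h.weight_pos 2)
  have hS_sum : l 0 + l 1 + l 2 = 1 := by rw [← Fin.sum_univ_three, h.sum_weight]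
  have hS_le : R ≤ (l 0 + l 2) * (r + R) := by
    linarith [h.weight_mul_le 1, congrArg (· * (r + R)) hS_sum]
  have hsum : 4 * ((l 0 + l 2) * (r + R) - r) ≤
      (l 0 + l 2) * (⟪a 2, p 2 - p 0⟫ + ⟪a 0, p 0 - p 2⟫) :=
    four_mul_le_add_mul_add (h.weight_pos 0) (h.weight_pos 2) (by linarith)
      (h.add_weight_mul_sub_le (by decide))
      (add_comm (l 2) (l 0) ▸ h.add_weight_mul_sub_le (by decide))
  refine le_of_mul_le_mul_left (le_trans ?_ hsum) hS
  have hr_le : r ≤ (l 0 + l 2) * (r * (r + R) / R) := by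
    rw [mul_div_assoc', le_div_iff₀ hR]
    nlinarith
  calc (l 0 + l 2) * (4 * ((R ^ 2 - r ^ 2) / R))
      = 4 * ((l 0 + l 2) * (r + R) - (l 0 + l 2) * (r * (r + R) / R)) := by field_simp; ring
    _ ≤ 4 * ((l 0 + l 2) * (r + R) - r) := by gcongr

lemma add_mul_le_inner_or (h : IsTouchingSystem K z r R l a p) (hr : 0 < r) (hrR : r ≤ R)
    (hβ : 0 ≤ β) (hβα : β ≤ α) :
    (α + β) * ((R ^ 2 - r ^ 2) / R) ≤ ⟪β • a 2 - α • a 0, z - p 0⟫ ∨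
      (α + β) * (2 * ((R ^ 2 - r ^ 2) / R)) ≤ ⟪β • a 2 - α • a 0, p 2 - p 0⟫ := by
  have hsum := h.four_mul_le_inner_add_inner hr hrR
  set H := (R ^ 2 - r ^ 2) / R
  set A := ⟪a 2, p 2 - p 0⟫ with hA
  set B := ⟪a 0, p 0 - p 2⟫ with hB
  have hHR : H ≤ R := (div_le_iff₀ (hr.trans_le hrR)).2 (by nlinarith)
  have hz0 : ⟪a 0, z - p 0⟫ = -R := by rw [← neg_sub, inner_neg_right, h.inner_point]
  have hz2 : ⟪a 2, z - p 0⟫ = A - R := by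
    rw [hA, ← h.inner_point 2, ← inner_sub_right, sub_sub_sub_cancel_left]
  have hB' : ⟪a 0, p 2 - p 0⟫ = -B := by rw [hB, ← inner_neg_right, neg_sub]
  simp only [inner_sub_left, real_inner_smul_left, hz0, hz2, hB', ← hA]
  rcases le_or_gt (2 * H) A with hAH | hAH
  · left
    nlinarith [mul_le_mul_of_nonneg_left hAH hβ, mul_le_mul_of_nonneg_left hHR (sub_nonneg.2 hβα)]
  · right
    have hAB : 0 ≤ (α - β) * (B - A) := mul_nonneg (sub_nonneg.2 hβα) (by linarith)
    nlinarith [mul_le_mul_of_nonneg_left hsum (by linarith : 0 ≤ α + β)]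

lemma exists_inner_smul_le_of_le (h : IsTouchingSystem K z r R l a p) (hr : 0 < r)
    (hφ : Real.goldenRatio * r ≤ R) (hβ : 0 ≤ β) (hβα : β ≤ α) {x : E}
    (h0 : |⟪a 0, x⟫| ≤ 1) (h2 : |⟪a 2, x⟫| ≤ 1) (hx : z + r • x ∈ K) :
    ∃ y ∈ K - K, ⟪β • a 2 - α • a 0, (2 * ((r + R) / Real.goldenRatio ^ 2)) • x⟫ ≤
      ⟪β • a 2 - α • a 0, y⟫ := by
  have hrR : r ≤ R := (le_mul_of_one_le_left hr.le Real.one_lt_goldenRatio.le).trans hφ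
  have hW : 0 < (r + R) / Real.goldenRatio ^ 2 :=
    div_pos (by linarith) (pow_pos Real.goldenRatio_pos 2)
  have hcases := h.add_mul_le_inner_or hr hrR hβ hβα
  have hfx : ⟪β • a 2 - α • a 0, x⟫ ≤ α + β := by
    simp only [inner_sub_left, real_inner_smul_left]
    linarith [mul_le_mul_of_nonneg_left (neg_le_of_abs_le h0) (hβ.trans hβα),
      mul_le_mul_of_nonneg_left (le_of_abs_le h2) hβ]
  set f := β • a 2 - α • a 0
  rw [real_inner_smul_right]
  rcases le_total ⟪f, x⟫ 0 with hneg | hpos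
  · refine ⟨p 0 - p 0, sub_mem_sub (h.point_mem 0) (h.point_mem 0), ?_⟩
    rw [sub_self, inner_zero_right]
    exact mul_nonpos_of_nonneg_of_nonpos (by positivity) hneg
  have hH := add_div_goldenRatio_sq_le hr hφ
  have hHr := two_mul_add_div_goldenRatio_sq_le hr hφ
  set H := (R ^ 2 - r ^ 2) / R
  rcases hcases with hz | hp
  · refine ⟨z + r • x - p 0, sub_mem_sub hx (h.point_mem 0), ?_⟩
    calc 2 * ((r + R) / Real.goldenRatio ^ 2) * ⟪f, x⟫ ≤ (r + H) * ⟪f, x⟫ := by gcongr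
      _ ≤ r * ⟪f, x⟫ + (α + β) * H := by nlinarith
      _ ≤ r * ⟪f, x⟫ + ⟪f, z - p 0⟫ := by gcongr
      _ = ⟪f, z + r • x - p 0⟫ := by
        rw [add_sub_right_comm, inner_add_right, real_inner_smul_right, add_comm]
  · refine ⟨p 2 - p 0, sub_mem_sub (h.point_mem 2) (h.point_mem 0), ?_⟩
    calc 2 * ((r + R) / Real.goldenRatio ^ 2) * ⟪f, x⟫ ≤ 2 * H * (α + β) := by
          gcongr
          linarith
      _ = (α + β) * (2 * H) := mul_comm _ _
      _ ≤ ⟪f, p 2 - p 0⟫ := hp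

lemma exists_inner_smul_le (h : IsTouchingSystem K z r R l a p) (hr : 0 < r)
    (hφ : Real.goldenRatio * r ≤ R) (hα : 0 ≤ α) (hβ : 0 ≤ β) {x : E}
    (h0 : |⟪a 0, x⟫| ≤ 1) (h2 : |⟪a 2, x⟫| ≤ 1) (hx : z + r • x ∈ K) (hx' : z - r • x ∈ K) :
    ∃ y ∈ K - K, ⟪β • a 2 - α • a 0, (2 * ((r + R) / Real.goldenRatio ^ 2)) • x⟫ ≤
      ⟪β • a 2 - α • a 0, y⟫ := by
  rcases le_total β α with hle | hle
  · exact h.exists_inner_smul_le_of_le hr hφ hβ hle h0 h2 hx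
  · have hrev := (h.comp_equiv Fin.revPerm).exists_inner_smul_le_of_le (x := -x) hr hφ hα hle
      (by simpa using h2) (by simpa using h0) (by simpa [sub_eq_add_neg] using hx')
    obtain ⟨y, hy, hle⟩ := hrev
    refine ⟨-y, by rwa [← neg_sub K K, neg_mem_neg], ?_⟩
    have hf : β • a 2 - α • a 0 = -(α • (a ∘ Fin.revPerm) 2 - β • (a ∘ Fin.revPerm) 0) := by
      simp
    rwa [hf, inner_neg_neg, inner_neg_left, ← inner_neg_right, ← smul_neg]

end Triple

/-- In `v = ∑ i, c i • a i` one may subtract any multiple of `∑ i, l i • a i = 0`; the middle one of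
the three ratios `c i / l i` cancels one term and leaves the other two with opposite signs. -/
lemma exists_equiv_fin_three_eq_sub (h : IsTouchingSystem K z r R l a p)
    (hspan : Submodule.span ℝ (range a) = ⊤) (hcard : Fintype.card ι = 3) (v : E) :
    ∃ (e : Fin 3 ≃ ι) (α β : ℝ), 0 ≤ α ∧ 0 ≤ β ∧ v = β • a (e 2) - α • a (e 0) := by
  obtain ⟨c, rfl⟩ := (Submodule.mem_span_range_iff_exists_fun ℝ).1 (Submodule.eq_top_iff'.1 hspan v)
  obtain ⟨e, hmono⟩ := exists_equiv_fin_monotone_comp hcard fun i => c i / l i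
  let ratio (k : Fin 3) : ℝ := c (e k) / l (e k)
  have hc (k : Fin 3) : c (e k) = l (e k) * ratio k := by
    rw [mul_div_cancel₀ _ (h.weight_pos (e k)).ne']
  have hzero := (h.comp_equiv e).sum_weight_smul
  refine ⟨e, l (e 0) * (ratio 1 - ratio 0), l (e 2) * (ratio 2 - ratio 1),
    mul_nonneg (h.weight_pos _).le (sub_nonneg.2 (hmono (by decide))),
    mul_nonneg (h.weight_pos _).le (sub_nonneg.2 (hmono (by decide))), ?_⟩
  rw [← e.sum_comp]
  simp only [hc, Fin.sum_univ_three, Function.comp_apply] at hzero ⊢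
  linear_combination (norm := module) ratio 1 • hzero

lemma smul_mem_sub_of_goldenRatio_mul_le [CompleteSpace E] (h : IsTouchingSystem K z r R l a p)
    (hspan : Submodule.span ℝ (range a) = ⊤) (hcard : Fintype.card ι = 3) (hr : 0 < r)
    (hφ : Real.goldenRatio * r ≤ R) (hconv : Convex ℝ K) (hK : IsCompact K) {x : E}
    (hax : ∀ i, |⟪a i, x⟫| ≤ 1) (hx : z + r • x ∈ K) (hx' : z - r • x ∈ K) :
    (2 * ((r + R) / Real.goldenRatio ^ 2)) • x ∈ K - K := by
  refine mem_of_forall_exists_inner_le (hconv.sub hconv) (isCompact_sub hK hK).isClosed fun v => ?_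
  obtain ⟨e, α, β, hα, hβ, rfl⟩ := h.exists_equiv_fin_three_eq_sub hspan hcard v
  exact (h.comp_equiv e).exists_inner_smul_le hr hφ hα hβ (hax _) (hax _) hx hx'

lemma card_eq_finrank_add_one [FiniteDimensional ℝ E] (h : IsTouchingSystem K z r R l a p)
    (hind : AffineIndependent ℝ a) (hr : 0 < r) (hlt : Module.finrank ℝ E * r < r + R) :
    Fintype.card ι = Module.finrank ℝ E + 1 := by
  have hge : Module.finrank ℝ E < Fintype.card ι := by
    exact_mod_cast lt_of_mul_lt_mul_right (hlt.trans_le h.add_le_card_mul) hr.le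
  exact le_antisymm (hind.card_le_finrank_succ.trans (by gcongr; exact Submodule.finrank_le _)) hge

end IsTouchingSystem

end InnerProductSpace

section ConvexBody

open Topology

variable {K C : Set E2} {a t x y : E2} {ρ : ℝ}

lemma IsConvexBody.nonempty (hK : IsConvexBody K) : K.Nonempty := hK.2.2.mono interior_subset

lemma IsConvexBody.mem_nhds_zero (hC : IsConvexBody C) (hsymm : C = -C) : C ∈ 𝓝 0 :=
  mem_interior_iff_mem_nhds.1 (zero_mem_interior_of_eq_neg hC.1 hsymm hC.2.2)

section Polar

lemma neg_mem_polarBody (hsymm : C = -C) (ha : a ∈ polarBody C) : -a ∈ polarBody C := fun x hx => by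
  rw [inner_neg_right, ← inner_neg_left]
  exact ha (-x) (neg_mem_of_eq_neg hsymm hx)

lemma inner_le_one_of_mem_polarBody (ha : a ∈ polarBody C) (hx : x ∈ C) : ⟪a, x⟫ ≤ 1 := by
  rw [real_inner_comm]
  exact ha x hx

lemma abs_inner_le_one_of_mem_polarBody (hsymm : C = -C) (ha : a ∈ polarBody C) (hx : x ∈ C) :
    |⟪a, x⟫| ≤ 1 := by
  refine abs_le'.2 ⟨inner_le_one_of_mem_polarBody ha hx, ?_⟩
  rw [← inner_neg_left]
  exact inner_le_one_of_mem_polarBody (neg_mem_polarBody hsymm ha) hx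

lemma isCompact_polarBody (hC : C ∈ 𝓝 0) : IsCompact (polarBody C) := by
  have hclosed : IsClosed (polarBody C) := by
    simp only [polarBody, ofPred_forall]
    exact isClosed_biInter fun x _ => isClosed_le (by fun_prop) continuous_const
  obtain ⟨ρ, hρ, hball⟩ := exists_pos_subset_smul (Metric.isBounded_closedBall (x := 0) (r := 1)) hC
  refine Metric.isCompact_of_isClosed_isBounded hclosed
    (isBounded_iff_forall_norm_le.2 ⟨ρ, fun a ha => ?_⟩)
  rcases eq_or_ne a 0 with rfl | ha0
  · simpa using hρ.le
  obtain ⟨c, hc, hca⟩ := hball (a := ‖a‖⁻¹ • a) (by simp [norm_smul, ha0])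
  calc ‖a‖ = ⟪‖a‖⁻¹ • a, a⟫ := by
        rw [real_inner_smul_left, real_inner_self_eq_norm_sq]
        field_simp
    _ = ρ * ⟪c, a⟫ := by rw [← hca, real_inner_smul_left]
    _ ≤ ρ := mul_le_of_le_one_right hρ.le (ha c hc)

lemma mem_iff_forall_polarBody (hconv : Convex ℝ C) (hclosed : IsClosed C) (h0 : 0 ∈ C) :
    x ∈ C ↔ ∀ a ∈ polarBody C, ⟪a, x⟫ ≤ 1 := by
  refine ⟨fun hx a ha => inner_le_one_of_mem_polarBody ha hx, fun h => ?_⟩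
  by_contra hx
  obtain ⟨v, u, hlt, hu⟩ := exists_inner_lt_of_notMem hconv hclosed hx
  have hu_pos : 0 < u := by simpa using hlt 0 h0
  refine (h (u⁻¹ • v) fun c hc => ?_).not_gt ?_
  · rw [real_inner_smul_right, real_inner_comm, inv_mul_le_one₀ hu_pos]
    exact (hlt c hc).le
  · rwa [real_inner_smul_left, one_lt_inv_mul₀ hu_pos]

lemma mem_smul_iff_forall_polarBody (hC : IsConvexBody C) (hsymm : C = -C) (hρ : 0 < ρ) :
    x ∈ ρ • C ↔ ∀ a ∈ polarBody C, ⟪a, x⟫ ≤ ρ := by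
  rw [mem_smul_set_iff_inv_smul_mem₀ hρ.ne', mem_iff_forall_polarBody hC.1 hC.2.1.isClosed
    (mem_of_mem_nhds (hC.mem_nhds_zero hsymm))]
  simp only [real_inner_smul_right, inv_mul_le_one₀ hρ]

lemma subset_smul_add_singleton_iff (hC : IsConvexBody C) (hsymm : C = -C) (hρ : 0 < ρ) :
    K ⊆ ρ • C + {t} ↔ ∀ p ∈ K, ∀ a ∈ polarBody C, ⟪a, p - t⟫ ≤ ρ := by
  simp only [subset_def, mem_add_singleton_iff, mem_smul_iff_forall_polarBody hC hsymm hρ]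

end Polar

section Circumradius

lemma circum_le_of_forall_inner_le (hK : K.Nonempty) (hC : IsConvexBody C) (hsymm : C = -C)
    (h : ∀ p ∈ K, ∀ a ∈ polarBody C, ⟪a, p - t⟫ ≤ ρ) : circum K C ≤ ρ := by
  have hρ : 0 ≤ ρ := by
    obtain ⟨p, hp⟩ := hK
    simpa using h p hp 0 fun x _ => by simp
  refine le_of_forall_pos_le_add fun ε hε => csInf_le ⟨0, fun _ hρ' => hρ'.1.le⟩ ?_
  have hρε : 0 < ρ + ε := by positivity
  exact ⟨hρε, t, (subset_smul_add_singleton_iff hC hsymm hρε).2 fun p hp a ha =>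
    (h p hp a ha).trans (by linarith)⟩

lemma exists_forall_inner_le_of_circum_lt (hK : IsCompact K) (hC : IsConvexBody C)
    (hsymm : C = -C) (hρ : circum K C < ρ) :
    ∃ t, ∀ p ∈ K, ∀ a ∈ polarBody C, ⟪a, p - t⟫ ≤ ρ := by
  obtain ⟨ρ₀, hρ₀, hsub⟩ := exists_pos_subset_smul hK.isBounded (hC.mem_nhds_zero hsymm)
  have hne : {ρ : ℝ | 0 < ρ ∧ ∃ t : E2, K ⊆ ρ • C + {t}}.Nonempty :=
    ⟨ρ₀, hρ₀, 0, by simpa using hsub⟩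
  obtain ⟨ρ', ⟨hρ', t, ht⟩, hlt⟩ := exists_lt_of_csInf_lt hne hρ
  exact ⟨t, fun p hp a ha =>
    ((subset_smul_add_singleton_iff hC hsymm hρ').1 ht p hp a ha).trans hlt.le⟩

lemma circum_nonneg : 0 ≤ circum K C := Real.sInf_nonneg fun _ hρ => hρ.1.le

lemma exists_circumcenter (hK : IsCompact K) (hne : K.Nonempty) (hC : IsConvexBody C)
    (hsymm : C = -C) : ∃ z, ∀ p ∈ K, ∀ a ∈ polarBody C, ⟪a, p - z⟫ ≤ circum K C := by
  obtain ⟨p₀, hp₀⟩ := hne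
  let centers (ρ : Ioi (circum K C)) : Set E2 :=
    {t | ∀ p ∈ K, ∀ a ∈ polarBody C, ⟪a, p - t⟫ ≤ ρ}
  have hmono : Monotone centers := fun ρ ρ' hle t ht p hp a ha => (ht p hp a ha).trans hle
  have hclosed (ρ) : IsClosed (centers ρ) := by
    simp only [centers, ofPred_forall]
    exact isClosed_biInter fun p _ => isClosed_biInter fun a _ =>
      isClosed_le (by fun_prop) continuous_const
  have hcompact (ρ) : IsCompact (centers ρ) := by
    refine (isCompact_sub (isCompact_singleton (x := p₀)) (hC.2.1.smul (ρ : ℝ))).of_isClosed_subset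
      (hclosed ρ) fun t ht => ?_
    refine ⟨p₀, rfl, p₀ - t, ?_, sub_sub_cancel p₀ t⟩
    exact (mem_smul_iff_forall_polarBody hC hsymm (circum_nonneg.trans_lt ρ.2)).2 (ht p₀ hp₀)
  obtain ⟨z, hz⟩ := IsCompact.nonempty_iInter_of_directed_nonempty_isCompact_isClosed centers
    hmono.directed_ge (fun ρ => exists_forall_inner_le_of_circum_lt hK hC hsymm ρ.2)
    hcompact hclosed
  exact ⟨z, fun p hp a ha => le_of_forall_gt_imp_ge_of_dense fun ρ hρ =>
    mem_iInter.1 hz ⟨ρ, hρ⟩ p hp a ha⟩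

lemma circum_smul_right {c : ℝ} (hc : 0 < c) : circum K (c • C) = c⁻¹ * circum K C := by
  have hset : {ρ : ℝ | 0 < ρ ∧ ∃ t : E2, K ⊆ ρ • c • C + {t}} =
      c⁻¹ • {ρ : ℝ | 0 < ρ ∧ ∃ t : E2, K ⊆ ρ • C + {t}} := by
    ext ρ
    simp [mem_inv_smul_set_iff₀ hc.ne', smul_smul, mul_comm, hc]
  rw [circum, hset, Real.sInf_smul_of_nonneg (inv_nonneg.2 hc.le), smul_eq_mul, circum]

lemma diamB_eq_circum_sub (hC : Convex ℝ C) (hsymm : C = -C) : diamB K C = circum (K - K) C := by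
  rw [diamB, sub_self_eq_two_smul hC hsymm, circum_smul_right two_pos,
    mul_inv_cancel_left₀ two_ne_zero]

lemma inner_sub_le_diamB (hK : IsCompact K) (hC : IsConvexBody C) (hsymm : C = -C)
    (ha : a ∈ polarBody C) (hx : x ∈ K) (hy : y ∈ K) : ⟪a, x - y⟫ ≤ diamB K C := by
  rw [diamB_eq_circum_sub hC.1 hsymm]
  obtain ⟨z, hz⟩ := exists_circumcenter (isCompact_sub hK hK) ⟨x - y, sub_mem_sub hx hy⟩ hC hsymm
  have hxy := hz (x - y) (sub_mem_sub hx hy) a ha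
  have hyx := hz (y - x) (sub_mem_sub hy hx) (-a) (neg_mem_polarBody hsymm ha)
  simp only [inner_neg_left, inner_sub_right] at hxy hyx ⊢
  linarith

end Circumradius

section Inradius

lemma IsConvexBody.nontrivial (hC : IsConvexBody C) : C.Nontrivial := by
  obtain ⟨x, hx⟩ := hC.2.2
  exact (infinite_of_mem_nhds x (mem_interior_iff_mem_nhds.1 hx)).nontrivial

lemma isGreatest_inrad (hK : IsConvexBody K) (hC : IsConvexBody C) (h0 : 0 ∈ C) :
    IsGreatest {ρ : ℝ | 0 < ρ ∧ ∃ t : E2, ρ • C + {t} ⊆ K} (inrad K C) := by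
  obtain ⟨ρ₀, hρ₀, t₀, ht₀⟩ := exists_pos_smul_add_subset hK.2.2 hC.2.1.isBounded
  obtain ⟨M, hM⟩ := bddAbove_setOf_smul_add_subset hK.2.1.isBounded hC.nontrivial
  let inballs : Set (ℝ × E2) := (Icc ρ₀ M ×ˢ K) ∩ {q | ∀ c ∈ C, q.1 • c + q.2 ∈ K}
  have hcompact : IsCompact inballs := by
    refine (isCompact_Icc.prod hK.2.1).inter_right ?_
    simp only [ofPred_forall]
    exact isClosed_biInter fun c _ => hK.2.1.isClosed.preimage (by fun_prop)
  have hmem {ρ t} (hle : ρ₀ ≤ ρ) (ht : ρ • C + {t} ⊆ K) : (ρ, t) ∈ inballs := by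
    have ht' := smul_add_singleton_subset_iff.1 ht
    exact ⟨⟨⟨hle, hM ⟨hρ₀.trans_le hle, t, ht⟩⟩, by simpa using ht' 0 h0⟩, ht'⟩
  obtain ⟨⟨ρ, t⟩, ⟨⟨⟨hρ₀ρ, _⟩, _⟩, ht⟩, hmax⟩ :=
    hcompact.exists_isMaxOn ⟨_, hmem le_rfl ht₀⟩ continuous_fst.continuousOn
  have hgreatest : IsGreatest {ρ : ℝ | 0 < ρ ∧ ∃ t : E2, ρ • C + {t} ⊆ K} ρ := by
    refine ⟨⟨hρ₀.trans_le hρ₀ρ, t, smul_add_singleton_subset_iff.2 ht⟩, fun ρ' ⟨_, t', ht'⟩ => ?_⟩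
    rcases le_total ρ₀ ρ' with hle | hle
    · exact hmax (hmem hle ht')
    · exact hle.trans hρ₀ρ
  rwa [inrad, hgreatest.csSup_eq]

lemma inrad_smul_right {c : ℝ} (hc : 0 < c) : inrad K (c • C) = c⁻¹ * inrad K C := by
  have hset : {ρ : ℝ | 0 < ρ ∧ ∃ t : E2, ρ • c • C + {t} ⊆ K} =
      c⁻¹ • {ρ : ℝ | 0 < ρ ∧ ∃ t : E2, ρ • C + {t} ⊆ K} := by
    ext ρ
    simp [mem_inv_smul_set_iff₀ hc.ne', smul_smul, mul_comm, hc]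
  rw [inrad, hset, Real.sSup_smul_of_nonneg (inv_nonneg.2 hc.le), smul_eq_mul, inrad]

lemma widthB_eq_inrad_sub (hC : Convex ℝ C) (hsymm : C = -C) : widthB K C = inrad (K - K) C := by
  rw [widthB, sub_self_eq_two_smul hC hsymm, inrad_smul_right two_pos,
    mul_inv_cancel_left₀ two_ne_zero]

lemma le_widthB_of_forall_smul_mem (hK : IsCompact K) (hC : IsConvexBody C) (hsymm : C = -C)
    (hρ : 0 < ρ) (h : ∀ x ∈ C, ρ • x ∈ K - K) : ρ ≤ widthB K C := by
  rw [widthB_eq_inrad_sub hC.1 hsymm]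
  exact le_csSup (bddAbove_setOf_smul_add_subset (isCompact_sub hK hK).isBounded hC.nontrivial)
    ⟨hρ, 0, smul_add_singleton_subset_iff.2 (by simpa using h)⟩

lemma two_mul_inrad_le_widthB (hK : IsConvexBody K) (hC : IsConvexBody C) (hsymm : C = -C) :
    2 * inrad K C ≤ widthB K C := by
  obtain ⟨hr, t, ht⟩ := (isGreatest_inrad hK hC (mem_of_mem_nhds (hC.mem_nhds_zero hsymm))).1
  rw [smul_add_singleton_subset_iff] at ht
  refine le_widthB_of_forall_smul_mem hK.2.1 hC hsymm (by positivity) fun x hx => ?_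
  refine ⟨_, ht x hx, _, ht (-x) (neg_mem_of_eq_neg hsymm hx), ?_⟩
  module

end Inradius

section PseudoComplete

lemma exists_isTouchingSystem_circumcenter (hK : IsConvexBody K) (hC : IsConvexBody C)
    (hsymm : C = -C) (hpc : inrad K C + circum K C = diamB K C) :
    ∃ z, (∀ q ∈ K, ∀ b ∈ polarBody C, ⟪b, q - z⟫ ≤ circum K C) ∧
      ∃ (ι : Type) (_ : Fintype ι) (l : ι → ℝ) (a p : ι → E2),
        IsTouchingSystem K z (inrad K C) (circum K C) l a p ∧ AffineIndependent ℝ a ∧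
          ∀ i, a i ∈ polarBody C := by
  obtain ⟨z, hz⟩ := exists_circumcenter hK.2.1 hK.nonempty hC hsymm
  refine ⟨z, hz, exists_isTouchingSystem ?_ fun a ha x hx y hy => ?_⟩
  · exact zero_mem_convexHull_of_forall_le hK.2.1 (isCompact_polarBody (hC.mem_nhds_zero hsymm)) hz
      fun t R' => circum_le_of_forall_inner_le hK.nonempty hC hsymm
  · rw [hpc]
    exact inner_sub_le_diamB hK.2.1 hC hsymm ha hx hy

lemma two_mul_add_div_le_widthB_of_goldenRatio_mul_le (hK : IsConvexBody K) (hC : IsConvexBody C)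
    (hsymm : C = -C) (hpc : inrad K C + circum K C = diamB K C)
    (hφ : Real.goldenRatio * inrad K C ≤ circum K C) :
    2 * ((inrad K C + circum K C) / Real.goldenRatio ^ 2) ≤ widthB K C := by
  obtain ⟨hr, t, ht⟩ := (isGreatest_inrad hK hC (mem_of_mem_nhds (hC.mem_nhds_zero hsymm))).1
  rw [smul_add_singleton_subset_iff] at ht
  obtain ⟨z, hz, ι, _, l, a, p, h, hind, haC⟩ :=
    exists_isTouchingSystem_circumcenter hK hC hsymm hpc
  have hrR : inrad K C < circum K C :=
    (lt_mul_of_one_lt_left hr Real.one_lt_goldenRatio).trans_le hφ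
  have hR : 0 < circum K C := hr.trans hrR
  have hcard := h.card_eq_finrank_add_one hind hr (by
    rw [finrank_euclideanSpace_fin]
    push_cast
    linarith)
  have hspan := span_range_eq_top_of_affineIndependent hind hcard
  obtain rfl : t = z := h.eq_center_of_forall_smul_add_mem hspan hR hsymm
    (fun i => (mem_smul_iff_forall_polarBody hC hsymm hR).2 (hz _ (h.point_mem i))) ht
  refine le_widthB_of_forall_smul_mem hK.2.1 hC hsymm
    (mul_pos two_pos (div_pos (by linarith) (pow_pos Real.goldenRatio_pos 2))) fun x hx => ?_
  refine h.smul_mem_sub_of_goldenRatio_mul_le hspan (by rw [hcard, finrank_euclideanSpace_fin])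
    hr hφ hK.1 hK.2.1 (fun i => abs_inner_le_one_of_mem_polarBody hsymm (haC i) hx) ?_ ?_
  · rw [add_comm]
    exact ht x hx
  · rw [sub_eq_neg_add, ← smul_neg]
    exact ht (-x) (neg_mem_of_eq_neg hsymm hx)

lemma two_mul_add_div_le_widthB (hK : IsConvexBody K) (hC : IsConvexBody C) (hsymm : C = -C)
    (hpc : inrad K C + circum K C = diamB K C) :
    2 * ((inrad K C + circum K C) / Real.goldenRatio ^ 2) ≤ widthB K C := by
  rcases le_total (Real.goldenRatio * inrad K C) (circum K C) with hφ | hφ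
  · exact two_mul_add_div_le_widthB_of_goldenRatio_mul_le hK hC hsymm hpc hφ
  · refine le_trans ?_ (two_mul_inrad_le_widthB hK hC hsymm)
    gcongr
    rw [div_le_iff₀ (pow_pos Real.goldenRatio_pos 2), Real.goldenRatio_sq]
    linarith

end PseudoComplete

end ConvexBody

theorem stmt1 (K C : Set E2) (hK : IsConvexBody K) (hC : IsConvexBody C)
    (hCsym : C = -C) (hpc : inrad K C + circum K C = diamB K C) :
    diamB K C / widthB K C ≤ (phiR + 1) / 2 := by
  have hr := (isGreatest_inrad hK hC (mem_of_mem_nhds (hC.mem_nhds_zero hCsym))).1.1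
  have hw : 0 < widthB K C := by linarith [two_mul_inrad_le_widthB hK hC hCsym]
  have hφ : phiR + 1 = Real.goldenRatio ^ 2 := Real.goldenRatio_sq.symm
  have hwidth := two_mul_add_div_le_widthB hK hC hCsym hpc
  rw [hpc, mul_div_assoc', div_le_iff₀ (pow_pos Real.goldenRatio_pos 2)] at hwidth
  rw [hφ, div_le_div_iff₀ hw two_pos]
  linarith
end
end

section
/- For every pair (ρ, s) with 1 ≤ s ≤ 2 and 1 ≤ ρ ≤ ((s+1)/2)·c(s), there exist a Minkowski centered convex body K ⊆ ℝ² with s(K) = s and a 0-symmetric convex body C ⊆ ℝ² such that K is pseudo-complete with respect to C and D(K,C)/w(K,C) = ρ. -/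
open scoped Pointwise RealInnerProductSpace
open Set

noncomputable section

/-!
Let `K = T ∩ (-s T)` for a triangle `T`, cut by a slab, and `C = K ∩ (-K) ∩ μ (K - K)` with
`μ = ρ / (s + 1)`. The three functionals defining `T` are at most `1` on `K`, reach `-s` on `K`,
and have the origin in their convex hull, so one of them is nonnegative on any given translation
vector, which therefore cannot improve an optimal containment. This gives `s(K) = s`, and also
`r = 1`, `R = s` and `D = s + 1` because `(K - K) / (s + 1) ⊆ C ⊆ K ∩ (-K)`. The width is `1 / μ`
provided that `K ∩ (-K)` contains a point `p` outside the interior of `μ (K - K)`. Here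
`p = (-1, 1)`, and the slab `-1 ≤ f ≤ G` with `f p = 1` makes this possible for all
`ρ ≤ (s + 1) / (1 + G)`.

The slab must keep the points of `K` at which the three functionals reach `-s`. For `s ≤ φ` this
allows `G = 1`. For `s > φ` the triangles form a family indexed by `u ∈ [s - 1, 3 - s]` with
`2 / (1 + G) = ratioFactor s u`, and `c(s)` is the maximum over `u`: the unconstrained maximiser
`√((s² - 1) / s)` is admissible up to `ŝ`, and beyond it the maximum sits at `u = 3 - s`.
-/

open scoped Topology

section ConvexSets

variable {E : Type*} [AddCommGroup E] [Module ℝ E] {C K L M : Set E} {s : ℝ}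

lemma sub_self_eq_two_smul_of_neg_eq (hC : Convex ℝ C) (hneg : -C = C) :
    C - C = (2 : ℝ) • C := by
  rw [sub_eq_add_neg, hneg, ← one_add_one_eq_two, hC.add_smul zero_le_one zero_le_one, one_smul]

lemma subset_of_add_singleton_subset (hL : -L = L) (hM : -M = M) (hconv : Convex ℝ M) {t : E}
    (h : L + {t} ⊆ M) : L ⊆ M := by
  intro x hx
  have hpos : x + t ∈ M := h (add_mem_add hx rfl)
  have hnx : -x ∈ L := by rwa [← mem_neg, hL]
  have hsub : x - t ∈ M := by
    rw [← hM, mem_neg, neg_sub, sub_eq_neg_add]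
    exact h (add_mem_add hnx rfl)
  simpa only [midpoint_add_sub] using hconv.midpoint_mem hpos hsub

lemma neg_subset_smul_of_subset_smul_neg (h : K ⊆ s • -K) : -K ⊆ s • K := by
  simpa only [smul_set_neg, neg_neg] using neg_subset_neg.2 h

lemma sub_self_subset_smul (hK : Convex ℝ K) (hs : 0 ≤ s) (h : K ⊆ s • -K) :
    K - K ⊆ (s + 1) • K :=
  calc K - K = -K + K := by rw [sub_eq_add_neg, add_comm]
    _ ⊆ s • K + K := add_subset_add_right (neg_subset_smul_of_subset_smul_neg h)
    _ = (s + 1) • K := by rw [hK.add_smul hs zero_le_one, one_smul]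

lemma subset_smul_of_sub_self_subset_smul (hs : 0 < s) (h : K ⊆ s • -K)
    (hC : K - K ⊆ (s + 1) • C) : K ⊆ s • C := by
  intro x hx
  obtain ⟨y, hy, rfl⟩ := h hx
  obtain ⟨z, hz, hzy⟩ := hC (sub_mem_sub hx hy)
  have hzy' : z = y := by
    refine smul_right_injective E (by positivity : s + 1 ≠ 0) (hzy.trans ?_)
    simp only [sub_neg_eq_add, add_smul, one_smul]
  exact ⟨y, hzy' ▸ hz, rfl⟩

end ConvexSets

section Gauge

variable {E : Type*} [AddCommGroup E] [TopologicalSpace E]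

lemma sub_self_mem_nhds_zero [IsTopologicalAddGroup E] {K : Set E} (hK : (interior K).Nonempty) :
    K - K ∈ 𝓝 (0 : E) := by
  obtain ⟨x, hx⟩ := hK
  refine Filter.mem_of_superset (isOpen_interior.sub_right.mem_nhds ⟨x, hx, x, hx, sub_self x⟩) ?_
  exact sub_subset_sub interior_subset interior_subset

lemma isCompact_sub_self [IsTopologicalAddGroup E] {K : Set E} (hK : IsCompact K) :
    IsCompact (K - K) := by
  rw [sub_eq_add_neg]
  exact hK.add hK.neg

variable [Module ℝ E] [ContinuousSMul ℝ E] {L M : Set E} {μ : ℝ}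

lemma le_gauge_of_forall_le (hM : M ∈ 𝓝 0) {f : Module.Dual ℝ E} {B : ℝ}
    (hB : ∀ x ∈ M, f x ≤ B) {p : E} (hp : f p = 1) (hμ : μ * B ≤ 1) : μ ≤ gauge M p := by
  by_contra! hlt
  obtain ⟨b, hb, hbμ, y, hy, rfl⟩ := exists_lt_of_gauge_lt (absorbent_nhds_zero hM) hlt
  have hby : b * f y = 1 := by simpa only [map_smul, smul_eq_mul] using hp
  have hbB : 1 ≤ b * B := hby ▸ mul_le_mul_of_nonneg_left (hB y hy) hb.le
  have hB0 : 0 < B := pos_of_mul_pos_right (one_pos.trans_le hbB) hb.le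
  exact (hbB.trans_lt (mul_lt_mul_of_pos_right hbμ hB0)).not_ge hμ

-- The point of the ray through `p` with gauge exactly `μ` lies in `L ∩ μ • M`.
lemma isGreatest_smul_inter_smul_subset [IsTopologicalAddGroup E] (hM : M ∈ 𝓝 0)
    (hconv : Convex ℝ M) (hclosed : IsClosed M) (hL : StarConvex ℝ 0 L) (hμ : 0 < μ) {p : E}
    (hp : p ∈ L) (hgauge : μ ≤ gauge M p) :
    IsGreatest {r : ℝ | 0 < r ∧ r • (L ∩ μ • M) ⊆ M} μ⁻¹ := by
  refine ⟨⟨inv_pos.2 hμ, ?_⟩, fun r ⟨hr, hrM⟩ ↦ ?_⟩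
  · rw [smul_set_inter₀ (inv_ne_zero hμ.ne'), inv_smul_smul₀ hμ.ne']
    exact inter_subset_right
  · set g := gauge M p
    have hg : 0 < g := hμ.trans_le hgauge
    have hmem : g⁻¹ • p ∈ M := by
      rw [← hclosed.closure_eq, ← gauge_le_one_iff_mem_closure hconv hM,
        gauge_smul_of_nonneg (inv_nonneg.2 hg.le), smul_eq_mul, inv_mul_cancel₀ hg.ne']
    have hray : μ • g⁻¹ • p ∈ L ∩ μ • M := by
      refine ⟨?_, smul_mem_smul_set hmem⟩
      rw [smul_smul]
      refine hL.smul_mem hp (by positivity) ?_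
      rwa [← div_eq_mul_inv, div_le_one hg]
    have hle : gauge M (r • μ • g⁻¹ • p) ≤ 1 :=
      gauge_le_one_of_mem (hrM (smul_mem_smul_set hray))
    rw [gauge_smul_of_nonneg hr.le, gauge_smul_of_nonneg hμ.le,
      gauge_smul_of_nonneg (inv_nonneg.2 hg.le), smul_eq_mul, smul_eq_mul, smul_eq_mul,
      inv_mul_cancel₀ hg.ne', mul_one] at hle
    rwa [← one_div, le_div_iff₀ hμ]

end Gauge

section TouchingFunctionals

variable {E : Type*} [AddCommGroup E] [Module ℝ E]

/-- The linear functionals that are at most `1` on `K` and attain the value `-s` on `K`. When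
`K ⊆ -s K` they are the normals of the common supporting hyperplanes of `K` and `-s⁻¹ K`; if these
hyperplanes surround the origin, no translation can improve the containment `K ⊆ -s K`. -/
def touchingFunctionals (K : Set E) (s : ℝ) : Set (Module.Dual ℝ E) :=
  {A | (∀ x ∈ K, A x ≤ 1) ∧ ∃ q ∈ K, A q = -s}

lemma exists_mem_apply_nonneg_of_zero_mem_convexHull {S : Set (Module.Dual ℝ E)}
    (hS : 0 ∈ convexHull ℝ S) (t : E) : ∃ A ∈ S, 0 ≤ A t := by
  by_contra! hneg
  have hconv : Convex ℝ {A : Module.Dual ℝ E | A t < 0} :=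
    convex_halfSpace_lt (Module.Dual.eval ℝ E t).isLinear 0
  exact lt_irrefl (0 : ℝ) (convexHull_min hneg hconv hS)

end TouchingFunctionals

section Radii

variable {K C : Set E2} {s : ℝ}

lemma minkAsym_eq (hs : 0 < s) (hK : K ⊆ s • -K)
    (hbal : 0 ∈ convexHull ℝ (touchingFunctionals K s)) : minkAsym K = s := by
  refine IsLeast.csInf_eq ⟨⟨hs, 0, ?_⟩, ?_⟩
  · simpa only [singleton_zero, sub_zero, zero_sub] using hK
  · rintro r ⟨hr, c, hc⟩
    obtain ⟨A, ⟨hA, q, hq, hAq⟩, hAc⟩ := exists_mem_apply_nonneg_of_zero_mem_convexHull hbal c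
    obtain ⟨_, ⟨c', hc', y, hy, rfl⟩, hqy⟩ := hc (sub_mem_sub hq rfl)
    obtain rfl : c = c' := hc'.symm
    have hval : r * (A c - A y) = A q - A c := by
      simpa only [map_sub, map_smul, smul_eq_mul] using congrArg A hqy
    nlinarith [mul_le_mul_of_nonneg_left (hA y hy) hr.le, mul_nonneg hr.le hAc]

lemma inrad_eq_one (hs : 0 < s) (hneg : -C = C) (hCK : C ⊆ K) (hKC : K ⊆ s • C)
    (hbal : 0 ∈ convexHull ℝ (touchingFunctionals K s)) : inrad K C = 1 := by
  refine IsGreatest.csSup_eq ⟨⟨one_pos, 0, ?_⟩, ?_⟩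
  · simpa only [one_smul, singleton_zero, add_zero] using hCK
  · rintro r ⟨-, t, ht⟩
    obtain ⟨A, ⟨hA, q, hq, hAq⟩, hAt⟩ := exists_mem_apply_nonneg_of_zero_mem_convexHull hbal t
    obtain ⟨c, hc, rfl⟩ := hKC hq
    have hAc : A c = -1 := by
      rw [map_smul, smul_eq_mul] at hAq
      exact mul_left_cancel₀ hs.ne' (by linarith)
    have hnc : -c ∈ C := by rwa [← mem_neg, hneg]
    have hle := hA _ (ht (add_mem_add (smul_mem_smul_set hnc) rfl))
    rw [map_add, map_smul, map_neg, hAc, neg_neg, smul_eq_mul, mul_one] at hle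
    linarith

lemma circum_eq (hs : 0 < s) (hneg : -C = C) (hCK : C ⊆ K) (hKC : K ⊆ s • C)
    (hbal : 0 ∈ convexHull ℝ (touchingFunctionals K s)) : circum K C = s := by
  refine IsLeast.csInf_eq ⟨⟨hs, 0, ?_⟩, ?_⟩
  · simpa only [singleton_zero, add_zero] using hKC
  · rintro r ⟨hr, t, ht⟩
    obtain ⟨A, ⟨hA, q, hq, hAq⟩, hAt⟩ := exists_mem_apply_nonneg_of_zero_mem_convexHull hbal t
    obtain ⟨_, ⟨c, hc, rfl⟩, t', ht', hqc⟩ := ht hq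
    obtain rfl : t = t' := ht'.symm
    have hnc : -c ∈ C := by rwa [← mem_neg, hneg]
    have hAc : -A c ≤ 1 := by simpa only [map_neg] using hA _ (hCK hnc)
    have hval : r * A c + A t = A q := by
      simpa only [map_add, map_smul, smul_eq_mul] using congrArg A hqc
    nlinarith

lemma diamB_eq_of_isLeast (hC : Convex ℝ C) (hneg : -C = C) {d : ℝ}
    (hd : IsLeast {r : ℝ | 0 < r ∧ K - K ⊆ r • C} d) : diamB K C = d := by
  obtain ⟨⟨hd0, hdC⟩, hmin⟩ := hd
  have hcirc : circum (K - K) (C - C) = d / 2 := by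
    rw [sub_self_eq_two_smul_of_neg_eq hC hneg]
    refine IsLeast.csInf_eq ⟨⟨half_pos hd0, 0, ?_⟩, ?_⟩
    · rwa [smul_smul, div_mul_cancel₀ d two_ne_zero, singleton_zero, add_zero]
    · rintro r ⟨hr, t, ht⟩
      rw [smul_smul] at ht
      have hsub : K - K + {-t} ⊆ (r * 2) • C := by
        rintro _ ⟨x, hx, _, rfl, rfl⟩
        obtain ⟨y, hy, _, rfl, rfl⟩ := ht hx
        simpa only [add_neg_cancel_right] using hy
      have hle : d ≤ r * 2 := hmin ⟨by positivity, subset_of_add_singleton_subset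
        (neg_sub K K) (by rw [← smul_set_neg, hneg]) (hC.smul _) hsub⟩
      linarith
  rw [diamB, hcirc]
  ring

lemma widthB_eq_of_isGreatest (hK : Convex ℝ K) (hC : Convex ℝ C) (hneg : -C = C) {w : ℝ}
    (hw : IsGreatest {r : ℝ | 0 < r ∧ r • C ⊆ K - K} w) : widthB K C = w := by
  obtain ⟨⟨hw0, hwC⟩, hmax⟩ := hw
  have hinrad : inrad (K - K) (C - C) = w / 2 := by
    rw [sub_self_eq_two_smul_of_neg_eq hC hneg]
    refine IsGreatest.csSup_eq ⟨⟨half_pos hw0, 0, ?_⟩, ?_⟩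
    · rwa [smul_smul, div_mul_cancel₀ w two_ne_zero, singleton_zero, add_zero]
    · rintro r ⟨hr, t, ht⟩
      rw [smul_smul] at ht
      have hle : r * 2 ≤ w := hmax ⟨by positivity, subset_of_add_singleton_subset
        (by rw [← smul_set_neg, hneg]) (neg_sub K K) (hK.sub hK) ht⟩
      linarith
  rw [widthB, hinrad]
  ring

lemma diamB_eq (hs : 0 < s) (hC : Convex ℝ C) (hneg : -C = C) (hCK : C ⊆ K)
    (hK : K ⊆ s • -K) (hKC : K - K ⊆ (s + 1) • C) {A : Module.Dual ℝ E2}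
    (hA : A ∈ touchingFunctionals K s) : diamB K C = s + 1 := by
  refine diamB_eq_of_isLeast hC hneg ⟨⟨by positivity, hKC⟩, fun r ⟨hr, hrC⟩ ↦ ?_⟩
  obtain ⟨hA1, q, hq, hAq⟩ := hA
  obtain ⟨y, hy, rfl⟩ := hK hq
  obtain ⟨c, hc, hcq⟩ := hrC (sub_mem_sub hq hy)
  have hnc : -c ∈ C := by rwa [← mem_neg, hneg]
  have hAc : -A c ≤ 1 := by simpa only [map_neg] using hA1 _ (hCK hnc)
  have hsy : s * A y = -s := by simpa only [map_smul, smul_eq_mul] using hAq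
  have hAy : A y = -1 := mul_left_cancel₀ hs.ne' (by linarith)
  have hval : r * A c = s * A y + A y := by
    simpa only [map_smul, map_sub, map_neg, sub_neg_eq_add, map_add, smul_eq_mul]
      using congrArg A hcq
  nlinarith

end Radii

section GaugeBody

variable {E : Type*} [AddCommGroup E] [Module ℝ E]

/-- The symmetric body `K ∩ (-K) ∩ μ (K - K)`. A Minkowski centered `K` of asymmetry `s` is
pseudo-complete with respect to it as soon as it contains `(K - K) / (s + 1)`, and the factor `μ`
adjusts the width of `K`. -/
def gaugeBody (K : Set E) (μ : ℝ) : Set E := (K ∩ -K) ∩ μ • (K - K)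

variable {K : Set E} {s μ : ℝ}

lemma neg_gaugeBody (K : Set E) (μ : ℝ) : -gaugeBody K μ = gaugeBody K μ := by
  rw [gaugeBody, inter_neg, inter_neg, neg_neg, inter_comm (-K), ← smul_set_neg, neg_sub]

lemma gaugeBody_subset (K : Set E) (μ : ℝ) : gaugeBody K μ ⊆ K :=
  inter_subset_left.trans inter_subset_left

lemma convex_gaugeBody (hK : Convex ℝ K) (μ : ℝ) : Convex ℝ (gaugeBody K μ) :=
  (hK.inter hK.neg).inter ((hK.sub hK).smul μ)

lemma sub_self_subset_smul_gaugeBody (hK : Convex ℝ K) (hs : 0 < s) (h : K ⊆ s • -K)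
    (hμ : 1 ≤ (s + 1) * μ) : K - K ⊆ (s + 1) • gaugeBody K μ := by
  have hs1 : s + 1 ≠ 0 := by positivity
  have hneg : K - K ⊆ (s + 1) • -K := by
    rw [← neg_sub K K, smul_set_neg]
    exact neg_subset_neg.2 (sub_self_subset_smul hK hs.le h)
  rw [gaugeBody, smul_set_inter₀ hs1, smul_set_inter₀ hs1, smul_smul]
  refine subset_inter (subset_inter (sub_self_subset_smul hK hs.le h) hneg) fun x hx ↦ ?_
  have ⟨y, hy, _⟩ := hx
  exact (hK.sub hK).mem_smul_of_zero_mem ⟨y, hy, y, hy, sub_self y⟩ hx hμ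

end GaugeBody

section Attainability

variable {K : Set E2} {s μ : ℝ}

lemma isConvexBody_gaugeBody (hK : IsConvexBody K) (hs : 0 < s) (h : K ⊆ s • -K)
    (hμ : 1 ≤ (s + 1) * μ) : IsConvexBody (gaugeBody K μ) := by
  obtain ⟨hconv, hcomp, hint⟩ := hK
  have hsub : K ⊆ s • gaugeBody K μ := subset_smul_of_sub_self_subset_smul hs h
    (sub_self_subset_smul_gaugeBody hconv hs h hμ)
  refine ⟨convex_gaugeBody hconv μ, (hcomp.inter hcomp.neg).inter
    ((isCompact_sub_self hcomp).smul μ), ?_⟩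
  have hint' := hint.mono (interior_mono hsub)
  rwa [interior_smul₀ hs.ne', smul_set_nonempty] at hint'

lemma widthB_gaugeBody (hK : IsConvexBody K) (hμ : 0 < μ) {p : E2} (hp : p ∈ K ∩ -K)
    (hgauge : μ ≤ gauge (K - K) p) : widthB K (gaugeBody K μ) = μ⁻¹ := by
  obtain ⟨hconv, hcomp, hint⟩ := hK
  have hzero : (0 : E2) ∈ K ∩ -K := by
    have hmid : (0 : E2) ∈ K := by
      simpa only [midpoint_self_neg] using hconv.midpoint_mem hp.1 hp.2
    exact ⟨hmid, by rwa [mem_neg, neg_zero]⟩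
  exact widthB_eq_of_isGreatest hconv (convex_gaugeBody hconv μ) (neg_gaugeBody K μ)
    (isGreatest_smul_inter_smul_subset (sub_self_mem_nhds_zero hint) (hconv.sub hconv)
      (isCompact_sub_self hcomp).isClosed ((hconv.inter hconv.neg).starConvex hzero) hμ hp hgauge)

/-- The pair `(ρ, s)` consists of the diameter-width ratio and the asymmetry of a Minkowski centered
planar body that is pseudo-complete with respect to some symmetric body. -/
def IsAttainable (ρ s : ℝ) : Prop :=
  ∃ K C : Set E2, IsConvexBody K ∧ MinkCentered K ∧ minkAsym K = s ∧
    IsConvexBody C ∧ C = -C ∧ inrad K C + circum K C = diamB K C ∧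
    diamB K C / widthB K C = ρ

theorem isAttainable_of_touchingFunctionals (hK : IsConvexBody K) (hs : 0 < s)
    (hcent : K ⊆ s • -K) (hbal : 0 ∈ convexHull ℝ (touchingFunctionals K s))
    {p : E2} (hp : p ∈ K ∩ -K) {f : Module.Dual ℝ E2} (hfp : f p = 1) {B : ℝ}
    (hB : ∀ x ∈ K - K, f x ≤ B) {ρ : ℝ} (hρ : 1 ≤ ρ) (hρB : ρ * B ≤ s + 1) :
    IsAttainable ρ s := by
  have hs1 : 0 < s + 1 := by positivity
  have hρ0 : 0 < ρ := one_pos.trans_le hρ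
  set μ : ℝ := ρ / (s + 1) with hμ
  have hμ0 : 0 < μ := div_pos hρ0 hs1
  have hμ1 : 1 ≤ (s + 1) * μ := by rwa [hμ, mul_div_cancel₀ ρ hs1.ne']
  have hμB : μ * B ≤ 1 := by rwa [hμ, div_mul_eq_mul_div, div_le_one hs1]
  have hasym : minkAsym K = s := minkAsym_eq hs hcent hbal
  have hneg := neg_gaugeBody K μ
  have hCK := gaugeBody_subset K μ
  have hMC := sub_self_subset_smul_gaugeBody hK.1 hs hcent hμ1
  have hKC := subset_smul_of_sub_self_subset_smul hs hcent hMC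
  obtain ⟨A, hA⟩ := convexHull_nonempty_iff.1 ⟨0, hbal⟩
  have hdiam : diamB K (gaugeBody K μ) = s + 1 :=
    diamB_eq hs (convex_gaugeBody hK.1 μ) hneg hCK hcent hMC hA
  have hwidth : widthB K (gaugeBody K μ) = μ⁻¹ :=
    widthB_gaugeBody hK hμ0 hp (le_gauge_of_forall_le (sub_self_mem_nhds_zero hK.2.2) hB hfp hμB)
  refine ⟨K, gaugeBody K μ, hK, by rwa [MinkCentered, hasym], hasym,
    isConvexBody_gaugeBody hK hs hcent hμ1, hneg.symm, ?_, ?_⟩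
  · rw [inrad_eq_one hs hneg hCK hKC hbal, circum_eq hs hneg hCK hKC hbal, hdiam, add_comm]
  · rw [hdiam, hwidth, div_inv_eq_mul, hμ, mul_div_cancel₀ ρ hs1.ne']

end Attainability

section Slabs

variable {ι E : Type*} [AddCommGroup E] [Module ℝ E] [TopologicalSpace E]
  {g : ι → StrongDual ℝ E} {a b : ι → ℝ}

/-- The intersection of the slabs `a i ≤ g i x ≤ b i`. -/
def slabInter (g : ι → StrongDual ℝ E) (a b : ι → ℝ) : Set E := {x | ∀ i, g i x ∈ Icc (a i) (b i)}

lemma slabInter_eq_iInter : slabInter g a b = ⋂ i, g i ⁻¹' Icc (a i) (b i) := by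
  ext x
  simp only [slabInter, mem_ofPred_eq, mem_iInter, mem_preimage]

lemma convex_slabInter : Convex ℝ (slabInter g a b) := by
  rw [slabInter_eq_iInter]
  exact convex_iInter fun i ↦ (convex_Icc _ _).linear_preimage (g i).toLinearMap

lemma isClosed_slabInter : IsClosed (slabInter g a b) := by
  rw [slabInter_eq_iInter]
  exact isClosed_iInter fun i ↦ isClosed_Icc.preimage (g i).continuous

lemma zero_mem_interior_slabInter [Finite ι] (ha : ∀ i, a i < 0) (hb : ∀ i, 0 < b i) :
    (0 : E) ∈ interior (slabInter g a b) := by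
  rw [slabInter_eq_iInter, interior_iInter_of_finite, mem_iInter]
  refine fun i ↦ preimage_interior_subset_interior_preimage (g i).continuous ?_
  rw [interior_Icc, mem_preimage, map_zero]
  exact ⟨ha i, hb i⟩

lemma slabInter_subset_smul_neg {s : ℝ} (hs : 0 < s) (ha : ∀ i, -a i ≤ s * b i)
    (hb : ∀ i, b i ≤ s * -a i) : slabInter g a b ⊆ s • -slabInter g a b := by
  intro x hx
  rw [mem_smul_set_iff_inv_smul_mem₀ hs.ne', mem_neg]
  intro i
  obtain ⟨hax, hxb⟩ := hx i
  rw [map_neg, map_smul, smul_eq_mul, inv_mul_eq_div]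
  constructor
  · rw [le_neg, div_le_iff₀' hs]
    exact hxb.trans (hb i)
  · rw [neg_le, le_div_iff₀' hs]
    linarith [ha i]

end Slabs

section CutTriangle

/-- The functional `x ↦ a x₀ + b x₁` on the plane. -/
def linForm (a b : ℝ) : StrongDual ℝ E2 :=
  a • EuclideanSpace.proj (0 : Fin 2) + b • EuclideanSpace.proj (1 : Fin 2)

lemma linForm_apply (a b : ℝ) (x : E2) : linForm a b x = a * x 0 + b * x 1 := rfl

lemma linForm_pt (a b x y : ℝ) : linForm a b (pt x y) = a * x + b * y := rfl

/-- The body `T ∩ (-s T)` for the triangle `T` with edge normals `(1, 0)`, `(0, 1)`, `(-m, -n)`,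
cut by the slab `-1 ≤ -c x₀ + (1 - c) x₁ ≤ G`. The slab contains `±(-1, 1)` and bounds the extent of
the body in this direction. -/
def cutTriangle (s m n c G : ℝ) : Set E2 :=
  slabInter ![linForm 1 0, linForm 0 1, linForm (-m) (-n), linForm (-c) (1 - c)]
    ![-s, -s, -s, -1] ![1, 1, 1, G]

variable {s m n c G : ℝ}

lemma mem_cutTriangle {x : E2} : x ∈ cutTriangle s m n c G ↔
    linForm 1 0 x ∈ Icc (-s) 1 ∧ linForm 0 1 x ∈ Icc (-s) 1 ∧
      linForm (-m) (-n) x ∈ Icc (-s) 1 ∧ linForm (-c) (1 - c) x ∈ Icc (-1) G := by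
  simp [cutTriangle, slabInter, Fin.forall_fin_succ]

lemma isConvexBody_cutTriangle (hs : 0 < s) (hG : 0 < G) :
    IsConvexBody (cutTriangle s m n c G) := by
  refine ⟨convex_slabInter, ?_, 0, zero_mem_interior_slabInter ?_ ?_⟩
  · have hbox : IsCompact (EuclideanSpace.equiv (Fin 2) ℝ ⁻¹' Icc (fun _ ↦ -s) (fun _ ↦ 1)) :=
      (EuclideanSpace.equiv (Fin 2) ℝ).toHomeomorph.isCompact_preimage.2 isCompact_Icc
    refine hbox.of_isClosed_subset isClosed_slabInter fun x hx ↦ ?_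
    have hx' := mem_cutTriangle.1 hx
    simp only [linForm_apply, one_mul, zero_mul, add_zero, zero_add] at hx'
    exact ⟨Fin.forall_fin_two.2 ⟨hx'.1.1, hx'.2.1.1⟩, Fin.forall_fin_two.2 ⟨hx'.1.2, hx'.2.1.2⟩⟩
  · simp [Fin.forall_fin_succ, hs]
  · simp [Fin.forall_fin_succ, hG]

lemma cutTriangle_subset_smul_neg (hs : 1 ≤ s) (hG : G ∈ Icc 1 s) :
    cutTriangle s m n c G ⊆ s • -cutTriangle s m n c G := by
  obtain ⟨hG1, hGs⟩ := hG
  refine slabInter_subset_smul_neg (by positivity) ?_ ?_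
  · simpa [Fin.forall_fin_succ] using one_le_mul_of_one_le_of_one_le hs hG1
  · simpa [Fin.forall_fin_succ, hGs] using one_le_mul_of_one_le_of_one_le hs hs

/-- The conditions on the parameters under which `cutTriangle s m n c G` contains `±(-1, 1)`, has
asymmetry `s` and is Minkowski centered. The quotients are the free coordinates of the vertices
`(-s, (m s - 1) / n)` and `((n s - 1) / m, -s)` of `T ∩ (-s T)`, so that the last two conditions say
that these vertices survive the cut. -/
structure CutTriangleParams (s m n c G : ℝ) : Prop where
  one_le : 1 ≤ s
  add_eq : m + n = s
  m_mem : m ∈ Ioc 0 1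
  n_mem : n ∈ Ioc 0 1
  c_mem : c ∈ Icc 0 1
  G_mem : G ∈ Icc 1 s
  left_vertex_le : c * s + (1 - c) * ((m * s - 1) / n) ≤ G
  le_bottom_vertex : -1 ≤ -c * ((n * s - 1) / m) - (1 - c) * s

lemma vertexCoord_mem_Icc (hs : 1 ≤ s) (hmn : m + n = s) (hm : m ∈ Icc 0 1) (hn : 0 < n) :
    (m * s - 1) / n ∈ Icc (-1) 1 := by
  obtain ⟨hm0, hm1⟩ := hm
  constructor
  · rw [le_div_iff₀ hn]
    nlinarith
  · rw [div_le_iff₀ hn]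
    nlinarith

namespace CutTriangleParams

lemma pos (h : CutTriangleParams s m n c G) : 0 < s := one_pos.trans_le h.one_le

lemma left_vertex_mem (h : CutTriangleParams s m n c G) :
    pt (-s) ((m * s - 1) / n) ∈ cutTriangle s m n c G := by
  obtain ⟨hs, hmn, hm, hn, ⟨hc0, -⟩, -, hleft, -⟩ := h
  obtain ⟨hy1, hy2⟩ := vertexCoord_mem_Icc hs hmn (Ioc_subset_Icc_self hm) hn.1
  have hny : n * ((m * s - 1) / n) = m * s - 1 := mul_div_cancel₀ _ hn.1.ne'
  simp only [mem_cutTriangle, linForm_pt, mem_Icc]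
  refine ⟨⟨?_, ?_⟩, ⟨?_, ?_⟩, ⟨?_, ?_⟩, ?_, ?_⟩ <;> nlinarith

lemma bottom_vertex_mem (h : CutTriangleParams s m n c G) :
    pt ((n * s - 1) / m) (-s) ∈ cutTriangle s m n c G := by
  obtain ⟨hs, hmn, hm, hn, ⟨hc0, hc1⟩, ⟨hG1, -⟩, -, hbottom⟩ := h
  obtain ⟨hx1, hx2⟩ :=
    vertexCoord_mem_Icc hs ((add_comm n m).trans hmn) (Ioc_subset_Icc_self hn) hm.1
  have hmx : m * ((n * s - 1) / m) = n * s - 1 := mul_div_cancel₀ _ hm.1.ne'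
  simp only [mem_cutTriangle, linForm_pt, mem_Icc]
  refine ⟨⟨?_, ?_⟩, ⟨?_, ?_⟩, ⟨?_, ?_⟩, ?_, ?_⟩ <;> nlinarith

lemma apex_mem (h : CutTriangleParams s m n c G) : pt 1 1 ∈ cutTriangle s m n c G := by
  obtain ⟨hs, hmn, -, -, ⟨hc0, hc1⟩, ⟨hG1, -⟩, -, -⟩ := h
  simp only [mem_cutTriangle, linForm_pt, mem_Icc]
  refine ⟨⟨?_, ?_⟩, ⟨?_, ?_⟩, ⟨?_, ?_⟩, ?_, ?_⟩ <;> linarith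

lemma antidiagonal_mem (h : CutTriangleParams s m n c G) :
    pt (-1) 1 ∈ cutTriangle s m n c G ∩ -cutTriangle s m n c G := by
  obtain ⟨hs, -, ⟨hm0, hm1⟩, ⟨hn0, hn1⟩, -, ⟨hG1, -⟩, -, -⟩ := h
  simp only [mem_inter_iff, mem_neg, mem_cutTriangle, map_neg, linForm_pt, mem_Icc]
  refine ⟨⟨⟨?_, ?_⟩, ⟨?_, ?_⟩, ⟨?_, ?_⟩, ?_, ?_⟩, ⟨?_, ?_⟩, ⟨?_, ?_⟩, ⟨?_, ?_⟩, ?_, ?_⟩ <;> linarith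

lemma zero_mem_convexHull_touchingFunctionals (h : CutTriangleParams s m n c G) :
    0 ∈ convexHull ℝ (touchingFunctionals (cutTriangle s m n c G) s) := by
  have hs := h.pos
  set S := touchingFunctionals (cutTriangle s m n c G) s
  have hleft : (linForm 1 0 : Module.Dual ℝ E2) ∈ S :=
    ⟨fun x hx ↦ (mem_cutTriangle.1 hx).1.2, _, h.left_vertex_mem, by simp [linForm_pt]⟩
  have hbottom : (linForm 0 1 : Module.Dual ℝ E2) ∈ S :=
    ⟨fun x hx ↦ (mem_cutTriangle.1 hx).2.1.2, _, h.bottom_vertex_mem, by simp [linForm_pt]⟩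
  have hapex : (linForm (-m) (-n) : Module.Dual ℝ E2) ∈ S :=
    ⟨fun x hx ↦ (mem_cutTriangle.1 hx).2.2.1.2, _, h.apex_mem,
      (linForm_pt _ _ _ _).trans (by linarith [h.add_eq])⟩
  have hm := h.m_mem.1
  have hn := h.n_mem.1
  refine mem_convexHull_of_exists_fintype ![m / (s + 1), n / (s + 1), 1 / (s + 1)]
    ![linForm 1 0, linForm 0 1, linForm (-m) (-n)] ?_ ?_ ?_ ?_
  · have hms : 0 ≤ m / (s + 1) := by positivity
    have hns : 0 ≤ n / (s + 1) := by positivity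
    have h1s : 0 ≤ s + 1 := by positivity
    simp [Fin.forall_fin_succ, hms, hns, h1s]
  · rw [Fin.sum_univ_three]
    change m / (s + 1) + n / (s + 1) + 1 / (s + 1) = 1
    rw [← add_div, ← add_div, h.add_eq, div_self (by positivity)]
  · simp [Fin.forall_fin_succ, hleft, hbottom, hapex]
  · ext x
    rw [Fin.sum_univ_three]
    change m / (s + 1) * linForm 1 0 x + n / (s + 1) * linForm 0 1 x +
      1 / (s + 1) * linForm (-m) (-n) x = 0
    simp only [linForm_apply]
    ring

theorem isAttainable (h : CutTriangleParams s m n c G) {ρ : ℝ} (hρ : 1 ≤ ρ)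
    (hρG : ρ * (1 + G) ≤ s + 1) : IsAttainable ρ s := by
  refine isAttainable_of_touchingFunctionals
    (isConvexBody_cutTriangle h.pos (one_pos.trans_le h.G_mem.1)) h.pos
    (cutTriangle_subset_smul_neg h.one_le h.G_mem) h.zero_mem_convexHull_touchingFunctionals
    h.antidiagonal_mem (f := (linForm (-c) (1 - c)).toLinearMap) ?_ ?_ hρ hρG
  · simp [linForm_pt]
  · rintro _ ⟨x, hx, y, hy, rfl⟩
    have hxG : linForm (-c) (1 - c) x ≤ G := (mem_cutTriangle.1 hx).2.2.2.2
    have hy1 : -1 ≤ linForm (-c) (1 - c) y := (mem_cutTriangle.1 hy).2.2.2.1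
    rw [ContinuousLinearMap.coe_coe, map_sub]
    linarith

end CutTriangleParams

end CutTriangle

section Parameters

lemma phiR_sq : phiR ^ 2 = phiR + 1 := Real.goldenRatio_sq

lemma one_lt_phiR : 1 < phiR := Real.one_lt_goldenRatio

variable {s u : ℝ}

lemma sq_le_add_one (hs : 0 ≤ s) (h : s ≤ phiR) : s ^ 2 ≤ s + 1 := by
  nlinarith [phiR_sq, one_lt_phiR]

lemma add_one_le_sq (h : phiR ≤ s) : s + 1 ≤ s ^ 2 := by
  nlinarith [phiR_sq, one_lt_phiR]

lemma cutTriangleParams_half (hs : 1 ≤ s) (h : s ^ 2 ≤ s + 1) :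
    CutTriangleParams s (s / 2) (s / 2) (1 / 2) 1 := by
  have hs0 : 0 < s := by positivity
  have hs2 : s ≤ 2 := by nlinarith
  have hvertex : (s / 2 * s - 1) / (s / 2) ≤ 2 - s := by
    rw [div_le_iff₀ (half_pos hs0)]
    nlinarith
  exact ⟨hs, add_halves s, ⟨half_pos hs0, by linarith⟩, ⟨half_pos hs0, by linarith⟩,
    by norm_num, ⟨le_rfl, hs⟩, by linarith, by linarith⟩

/-- The quantity `2 / (1 + G)` for the cut triangle with `m - n = u - 1` whose slab passes through
both vertices of `CutTriangleParams`: the ratio `(s + 1) / 2 * ratioFactor s u` is attained. -/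
def ratioFactor (s u : ℝ) : ℝ := (s * u + 1 - s) * (s + 1 - u) / ((s ^ 2 - 1) * u)

lemma ratioFactor_le_one (hs : 1 < s) (hφ : s + 1 ≤ s ^ 2) (hu : 0 < u) : ratioFactor s u ≤ 1 := by
  have hq : 0 < s ^ 2 - 1 := by nlinarith
  rw [ratioFactor, div_le_one (by positivity)]
  nlinarith [mul_nonneg (by linarith : 0 ≤ s) (sq_nonneg (u - 1))]

lemma two_div_le_ratioFactor (hs : 1 < s) (hus : s - 1 ≤ u) (hsu : s * u ≤ s + 1) :
    2 / (s + 1) ≤ ratioFactor s u := by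
  have hu : 0 < u := by linarith
  have hq : 0 < s ^ 2 - 1 := by nlinarith
  rw [ratioFactor, div_le_div_iff₀ (by linarith) (by positivity)]
  have hfactor : 0 ≤ (s + 1) * ((u - (s - 1)) * (s + 1 - s * u)) :=
    mul_nonneg (by linarith) (mul_nonneg (by linarith) (by linarith))
  linarith

/-- The slope parameter `c` for which the boundary of the slab passes through the vertex
`((n s - 1) / m, -s)`, where `m - n = u - 1`. -/
def cutSlope (s u : ℝ) : ℝ := (s + u - 1) / 2 * (s - 1) / (s * u + 1 - s)

lemma one_sub_cutSlope (hd : s * u + 1 - s ≠ 0) :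
    1 - cutSlope s u = (s + 1) * (u - s + 1) / (2 * (s * u + 1 - s)) := by
  rw [cutSlope]
  generalize hd' : s * u + 1 - s = d at *
  field_simp
  rw [← hd']
  ring

lemma cutSlope_left_vertex (hd : s * u + 1 - s ≠ 0) (hn : s + 1 - u ≠ 0) :
    cutSlope s u * s + (1 - cutSlope s u) * (((s + u - 1) / 2 * s - 1) / ((s + 1 - u) / 2)) =
      2 / ratioFactor s u - 1 := by
  rw [one_sub_cutSlope hd, cutSlope, ratioFactor]
  generalize hd' : s * u + 1 - s = d at *
  field_simp
  rw [← hd']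
  ring

lemma cutSlope_bottom_vertex (hd : s * u + 1 - s ≠ 0) (hm : s + u - 1 ≠ 0) :
    -cutSlope s u * (((s + 1 - u) / 2 * s - 1) / ((s + u - 1) / 2)) - (1 - cutSlope s u) * s =
      -1 := by
  rw [one_sub_cutSlope hd, cutSlope]
  generalize hd' : s * u + 1 - s = d at *
  field_simp
  rw [← hd']
  ring

lemma cutTriangleParams_cutSlope (hs : 1 < s) (hφ : s + 1 ≤ s ^ 2)
    (hu : u ∈ Icc (s - 1) (3 - s)) :
    CutTriangleParams s ((s + u - 1) / 2) ((s + 1 - u) / 2) (cutSlope s u)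
      (2 / ratioFactor s u - 1) := by
  obtain ⟨hu1, hu2⟩ := hu
  have hu0 : 0 < u := by linarith
  have hd : 0 < s * u + 1 - s := by nlinarith
  have hm : 0 < s + u - 1 := by linarith
  have hn : 0 < s + 1 - u := by linarith
  have hle := two_div_le_ratioFactor hs hu1 (by nlinarith)
  have hpos : 0 < ratioFactor s u := lt_of_lt_of_le (by positivity) hle
  refine ⟨hs.le, by ring, ⟨by linarith, by linarith⟩, ⟨by linarith, by linarith⟩, ⟨?_, ?_⟩,
    ⟨?_, ?_⟩, (cutSlope_left_vertex hd.ne' hn.ne').le, (cutSlope_bottom_vertex hd.ne' hm.ne').ge⟩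
  · have hs0 : 0 ≤ s - 1 := by linarith
    exact div_nonneg (mul_nonneg (by positivity) hs0) hd.le
  · rw [← sub_nonneg, one_sub_cutSlope hd.ne']
    have hus : 0 ≤ u - s + 1 := by linarith
    exact div_nonneg (mul_nonneg (by linarith) hus) (by positivity)
  · have h2 : 2 ≤ 2 / ratioFactor s u := by
      rw [le_div_iff₀ hpos]
      linarith [ratioFactor_le_one hs hφ hu0]
    linarith
  · have h2 : 2 / ratioFactor s u ≤ s + 1 := by
      rwa [div_le_iff₀ hpos, ← div_le_iff₀' (by linarith)]
    linarith

theorem isAttainable_of_le_ratioFactor (hs : 1 < s) (hφ : s + 1 ≤ s ^ 2)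
    (hu : u ∈ Icc (s - 1) (3 - s)) {ρ : ℝ} (hρ : 1 ≤ ρ)
    (hρu : ρ ≤ (s + 1) / 2 * ratioFactor s u) : IsAttainable ρ s := by
  have hpos : 0 < ratioFactor s u :=
    pos_of_mul_pos_right (one_pos.trans_le (hρ.trans hρu)) (by linarith)
  refine (cutTriangleParams_cutSlope hs hφ hu).isAttainable hρ ?_
  rw [add_sub_cancel, mul_div_assoc', div_le_iff₀ hpos]
  linarith

lemma cExpr3_eq_ratioFactor (hs : 1 < s) (hs3 : s < 3) : cExpr3 s = ratioFactor s (3 - s) := by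
  have hleft : (s - 3) * (s + 1) ≠ 0 := mul_ne_zero (by linarith) (by linarith)
  have hright : (s ^ 2 - 1) * (3 - s) ≠ 0 := mul_ne_zero (by nlinarith) (by linarith)
  rw [cExpr3, ratioFactor, div_eq_div_iff hleft hright]
  ring

/-- The maximiser `√((s² - 1) / s)` of `ratioFactor s` over the positive reals. -/
def optimalU (s : ℝ) : ℝ := Real.sqrt ((s ^ 2 - 1) / s)

lemma mul_optimalU_sq (hs : 1 < s) : s * optimalU s ^ 2 = s ^ 2 - 1 := by
  have hq : 0 < s ^ 2 - 1 := by nlinarith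
  rw [optimalU, Real.sq_sqrt (by positivity)]
  field_simp

lemma cExpr2_eq_ratioFactor (hs : 1 < s) : cExpr2 s = ratioFactor s (optimalU s) := by
  have hq : 0 < s ^ 2 - 1 := by nlinarith
  have hu : 0 < optimalU s := Real.sqrt_pos.2 (by positivity)
  have hsq := mul_optimalU_sq hs
  generalize optimalU s = u at hu hsq
  have hsqrt : Real.sqrt (s * (s ^ 2 - 1)) = s * u := by
    rw [← hsq, show s * (s * u ^ 2) = (s * u) ^ 2 by ring]
    exact Real.sqrt_sq (by positivity)
  have hden : 0 < s ^ 2 + 2 * s - 1 + 2 * (s * u) := by nlinarith [mul_pos (one_pos.trans hs) hu]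
  have hnum : (s * u + 1 - s) * (s + 1 - u) = (s ^ 2 + 2 * s - 1 - 2 * (s * u)) * u := by
    linear_combination hsq
  rw [cExpr2, ratioFactor, hsqrt, hnum, div_eq_div_iff (by positivity) (by positivity)]
  linear_combination (4 * s * (s ^ 2 - 1) * u) * hsq

lemma sub_one_le_optimalU (hs : 1 < s) (hs2 : s ≤ 2) : s - 1 ≤ optimalU s := by
  refine Real.le_sqrt_of_sq_le ?_
  rw [le_div_iff₀ (by linarith)]
  have hfactor : 0 ≤ (s - 1) * (1 + s * (2 - s)) :=
    mul_nonneg (by linarith) (by nlinarith)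
  linarith

/-- The polynomial `s (3 - s)² - (s² - 1)`, whose sign decides whether `optimalU s` respects the
constraint `u ≤ 3 - s`. -/
def transitionPoly (s : ℝ) : ℝ := s ^ 3 - 7 * s ^ 2 + 9 * s + 1

lemma optimalU_le_three_sub (hs : 0 < s) (hs3 : s ≤ 3) (h : 0 ≤ transitionPoly s) :
    optimalU s ≤ 3 - s := by
  rw [optimalU, Real.sqrt_le_left (by linarith), div_le_iff₀ hs]
  rw [transitionPoly] at h
  linarith

lemma optimalU_eq_three_sub (hs : 0 < s) (hs3 : s ≤ 3) (h : transitionPoly s = 0) :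
    optimalU s = 3 - s := by
  have hval : (s ^ 2 - 1) / s = (3 - s) ^ 2 := by
    rw [div_eq_iff hs.ne']
    rw [transitionPoly] at h
    linear_combination -h
  rw [optimalU, hval, Real.sqrt_sq (by linarith)]

lemma antitoneOn_transitionPoly : AntitoneOn transitionPoly (Icc 1 2) := by
  rintro a ⟨ha1, ha2⟩ b ⟨hb1, hb2⟩ hab
  have hfactor : 0 ≤ (b - a) * (7 * (a + b) - 9 - (a ^ 2 + a * b + b ^ 2)) :=
    mul_nonneg (by linarith) (by nlinarith)
  rw [transitionPoly, transitionPoly]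
  linarith

lemma transitionPoly_phiR_pos : 0 < transitionPoly phiR := by
  have hval : transitionPoly phiR = 4 * phiR - 5 := by
    rw [transitionPoly]
    linear_combination (phiR - 6) * phiR_sq
  nlinarith [phiR_sq, one_lt_phiR]

lemma transitionPoly_two_neg : transitionPoly 2 < 0 := by norm_num [transitionPoly]

lemma exists_transitionPoly_eq_zero : ∃ t ∈ Ioo phiR 2, transitionPoly t = 0 := by
  have hcont : ContinuousOn transitionPoly (Icc phiR 2) := by unfold transitionPoly; fun_prop
  exact intermediate_value_Ioo' Real.goldenRatio_lt_two.le hcont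
    ⟨transitionPoly_two_neg, transitionPoly_phiR_pos⟩

lemma sHat_le_of_transitionPoly_eq_zero {t : ℝ} (ht : t ∈ Ioo phiR 2)
    (hroot : transitionPoly t = 0) : sHat ≤ t := by
  have ht1 : 1 < t := one_lt_phiR.trans ht.1
  refine csInf_le ⟨phiR, fun x hx ↦ hx.1.le⟩ ⟨ht.1, ht.2, ?_⟩
  rw [cExpr2_eq_ratioFactor ht1, cExpr3_eq_ratioFactor ht1 (by linarith [ht.2]),
    optimalU_eq_three_sub (by linarith) (by linarith [ht.2]) hroot]

lemma transitionPoly_nonneg_of_le_sHat (hs : 1 ≤ s) (h : s ≤ sHat) : 0 ≤ transitionPoly s := by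
  obtain ⟨t, ht, hroot⟩ := exists_transitionPoly_eq_zero
  have hst : s ≤ t := h.trans (sHat_le_of_transitionPoly_eq_zero ht hroot)
  rw [← hroot]
  exact antitoneOn_transitionPoly ⟨hs, hst.trans ht.2.le⟩ ⟨hs.trans hst, ht.2.le⟩ hst

end Parameters

theorem stmt3 (ρ s : ℝ) (hs1 : 1 ≤ s) (hs2 : s ≤ 2)
    (hρ1 : 1 ≤ ρ) (hρ2 : ρ ≤ ((s + 1) / 2) * cFun s) :
    ∃ K C : Set E2, IsConvexBody K ∧ MinkCentered K ∧ minkAsym K = s ∧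
      IsConvexBody C ∧ C = -C ∧ inrad K C + circum K C = diamB K C ∧
      diamB K C / widthB K C = ρ := by
  change IsAttainable ρ s
  rw [cFun] at hρ2
  split_ifs at hρ2 with hsφ hsHat
  · have hsq : s ^ 2 ≤ s + 1 := sq_le_add_one (by linarith) hsφ
    exact (cutTriangleParams_half hs1 hsq).isAttainable hρ1 (by linarith)
  all_goals
    have hφs : phiR < s := not_le.1 hsφ
    have hs : 1 < s := one_lt_phiR.trans hφs
    have hsq : s + 1 ≤ s ^ 2 := add_one_le_sq hφs.le
  · rw [cExpr2_eq_ratioFactor hs] at hρ2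
    have hpoly : 0 ≤ transitionPoly s := transitionPoly_nonneg_of_le_sHat hs1 hsHat
    exact isAttainable_of_le_ratioFactor hs hsq ⟨sub_one_le_optimalU hs hs2,
      optimalU_le_three_sub (by linarith) (by linarith) hpoly⟩ hρ1 hρ2
  · rw [cExpr3_eq_ratioFactor hs (by linarith)] at hρ2
    exact isAttainable_of_le_ratioFactor hs hsq ⟨by linarith, le_rfl⟩ hρ1 hρ2
end
end
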